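/- The following decision problems about POMDPs are undecidable. Given as input a POMDP with state space Fin k, action set Fin m, rational transition probabilities, observation map obs : Fin k → Fin l, an initial state s, and a subset T of states: (a) decide whether there exists a randomized observation-based strategy σ with Pr_s^σ(coBuchi(T)) = 1; (b) decide whether there exists a randomized observation-based strategy σ with Pr_s^σ(Buchi(T)) > 0. Both problems are also undecidable when σ is restricted to pure observation-based strategies. Formally, for each of these four problems, the set of codes of yes-instances (under a standard encoding of the finite input data as natural numbers) is not a computable set. -/

import Mathlib

/-!
STATEMENT 18: undecidability, for POMDPs (given by finite rational data), of the
existence of a randomized (resp. pure) observation-based strategy that wins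
almost-surely a coBüchi objective, resp. positively a Büchi objective.
-/

open scoped ENNReal

namespace Stmt18

/-- Finite input data of a POMDP instance: `k` states, `m` actions, `l` observations,
a table of rational transition probabilities (given as pairs numerator/denominator),
an observation table, an initial state and a target set of states. -/
structure PInst where
  k : ℕ
  m : ℕ
  l : ℕ
  dtable : List (List (List (ℕ × ℕ)))
  otable : List ℕ
  s0 : ℕ
  T : List ℕ

/-- Standard encoding of instances as natural numbers (via tuples and lists). -/
def instEquiv : PInst ≃ ℕ × ℕ × ℕ × List (List (List (ℕ × ℕ))) × List ℕ × ℕ × List ℕ where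
  toFun I := (I.k, I.m, I.l, I.dtable, I.otable, I.s0, I.T)
  invFun p := ⟨p.1, p.2.1, p.2.2.1, p.2.2.2.1, p.2.2.2.2.1, p.2.2.2.2.2.1, p.2.2.2.2.2.2⟩
  left_inv _ := rfl
  right_inv _ := rfl

instance : Primcodable PInst := Primcodable.ofEquiv _ instEquiv

open MeasureTheory

/-- The rational transition probability `δ(s, a)(t)` encoded in the instance. -/
noncomputable def dprob (I : PInst) (s a t : ℕ) : ℝ≥0∞ :=
  (((((I.dtable.getD s []).getD a []).getD t (0, 1)).1 : ℝ≥0∞)) /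
    (((((I.dtable.getD s []).getD a []).getD t (0, 1)).2 : ℝ≥0∞))

/-- The transition function of the instance, on states `Fin I.k` and actions `Fin I.m`. -/
noncomputable def δof (I : PInst) : Fin I.k → Fin I.m → Fin I.k → ℝ≥0∞ :=
  fun s a t => dprob I s a t

/-- The observation map of the instance. -/
def obsof (I : PInst) : Fin I.k → ℕ := fun s => I.otable.getD s 0

/-- Validity of the instance: positive numbers of states and actions, initial state and
observations in range, and each `δ(s, a)` a probability distribution. -/
def Valid (I : PInst) : Prop :=
  0 < I.k ∧ 0 < I.m ∧ I.s0 < I.k ∧ (∀ o ∈ I.otable, o < I.l) ∧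
    ∀ (s : Fin I.k) (a : Fin I.m), (∑' t : Fin I.k, δof I s a t) = 1

/-- The initial state of the instance. -/
def init (I : PInst) (hk : 0 < I.k) : Fin I.k := ⟨I.s0 % I.k, Nat.mod_lt _ hk⟩

/-- A (randomized) strategy, given by action weights. -/
def IsStrat {S A : Type} (σ : List S → A → ℝ≥0∞) : Prop := ∀ h, ∑' a, σ h a = 1

/-- A pure strategy plays a Dirac distribution after every history. -/
def IsPure {S A : Type} [DecidableEq A] (σ : List S → A → ℝ≥0∞) : Prop :=
  ∀ h, ∃ a, ∀ b, σ h b = if b = a then 1 else 0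

/-- An observation-based strategy only depends on the observation sequence. -/
def ObsBased {S A O : Type} (obs : S → O) (σ : List S → A → ℝ≥0∞) : Prop :=
  ∀ h h' : List S, h.map obs = h'.map obs → σ h = σ h'

/-- The cylinder set of infinite plays extending the finite prefix `l`. -/
def Cyl {α : Type} (l : List α) : Set (ℕ → α) := {ρ | ∀ i : Fin l.length, ρ i.1 = l.get i}

/-- Probability of observing the successive states `rest` after the history `hist ++ [cur]`. -/
noncomputable def listProb {S A : Type} (δ : S → A → S → ℝ≥0∞) (σ : List S → A → ℝ≥0∞) :
    List S → S → List S → ℝ≥0∞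
  | _, _, [] => 1
  | hist, cur, s' :: rest =>
      (∑' a, σ (hist ++ [cur]) a * δ cur a s') * listProb δ σ (hist ++ [cur]) s' rest

/-- `Pr` is the family of Ionescu–Tulcea play measures of the POMDP `δ`. -/
def IsPlayMeasure {S A : Type} [MeasurableSpace S] (δ : S → A → S → ℝ≥0∞)
    (Pr : S → (List S → A → ℝ≥0∞) → Measure (ℕ → S)) : Prop :=
  ∀ s σ, IsStrat σ →
    IsProbabilityMeasure (Pr s σ) ∧
      ∀ l : List S, Pr s σ (Cyl (s :: l)) = listProb δ σ [] s l

/-- The Büchi objective: states in `T` are visited infinitely often. -/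
def BuchiSet (I : PInst) : Set (ℕ → Fin I.k) :=
  {ρ | ∀ N, ∃ n, N ≤ n ∧ (ρ n : ℕ) ∈ I.T}

/-- The coBüchi objective: eventually only states in `T` are visited. -/
def CoBuchiSet (I : PInst) : Set (ℕ → Fin I.k) :=
  {ρ | ∃ N, ∀ n, N ≤ n → (ρ n : ℕ) ∈ I.T}

/-- Yes-instances of problem (a): existence of a randomized observation-based
almost-sure winning strategy for the coBüchi objective. -/
def YesCoBuchiAS (I : PInst) : Prop :=
  ∃ hk : 0 < I.k, Valid I ∧
    ∀ Pr : Fin I.k → (List (Fin I.k) → Fin I.m → ℝ≥0∞) → Measure (ℕ → Fin I.k),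
      IsPlayMeasure (δof I) Pr →
        ∃ σ, IsStrat σ ∧ ObsBased (obsof I) σ ∧ Pr (init I hk) σ (CoBuchiSet I) = 1

/-- Yes-instances of problem (b): existence of a randomized observation-based
positive winning strategy for the Büchi objective. -/
def YesBuchiPos (I : PInst) : Prop :=
  ∃ hk : 0 < I.k, Valid I ∧
    ∀ Pr : Fin I.k → (List (Fin I.k) → Fin I.m → ℝ≥0∞) → Measure (ℕ → Fin I.k),
      IsPlayMeasure (δof I) Pr →
        ∃ σ, IsStrat σ ∧ ObsBased (obsof I) σ ∧ 0 < Pr (init I hk) σ (BuchiSet I)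

/-- Problem (a) restricted to pure observation-based strategies. -/
def YesCoBuchiASPure (I : PInst) : Prop :=
  ∃ hk : 0 < I.k, Valid I ∧
    ∀ Pr : Fin I.k → (List (Fin I.k) → Fin I.m → ℝ≥0∞) → Measure (ℕ → Fin I.k),
      IsPlayMeasure (δof I) Pr →
        ∃ σ, IsStrat σ ∧ IsPure σ ∧ ObsBased (obsof I) σ ∧
          Pr (init I hk) σ (CoBuchiSet I) = 1

/-- Problem (b) restricted to pure observation-based strategies. -/
def YesBuchiPosPure (I : PInst) : Prop :=
  ∃ hk : 0 < I.k, Valid I ∧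
    ∀ Pr : Fin I.k → (List (Fin I.k) → Fin I.m → ℝ≥0∞) → Measure (ℕ → Fin I.k),
      IsPlayMeasure (δof I) Pr →
        ∃ σ, IsStrat σ ∧ IsPure σ ∧ ObsBased (obsof I) σ ∧
          0 < Pr (init I hk) σ (BuchiSet I)

/-!
A Turing machine is simulated by a machine that only rotates a queue. Its configurations are
numbered so that a transition is affine in the numbers: a guessed run, given letter by letter,
becomes a product of nonnegative integer matrices, and two entries `x`, `y` of the product agree
exactly if the guess is an accepting run. Since `2 * (x ^ 2 + y ^ 2) ≤ 4 * x * y` only if `x = y`,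
two weighted automata, built from the tensor square of the matrices, satisfy
`weight false w < weight true w` for some word `w` exactly if the machine halts.

A blind player can compare the two weights. The gadget copies a fair coin into one of the two
automata, runs it on the word that the player feeds, and turns acceptance into a verdict. If the
weight of automaton `true` never exceeds that of automaton `false`, then every bet on `true` is at
least as likely to be lost as to be won. If it is larger for some word, then repeating that word
makes the odds of a bet as good as desired, and infinitely many bets with summable probabilities of
losing win the Büchi objective with positive probability. For the almost-sure coBüchi objective a
lost play leaves the sink with probability `1 / 2` whenever the player bets again.
-/

section TuringMachines

open Turing Turing.PartrecToTM2

theorem exists_partrec_apply_eq {f : ℕ → ℕ} (hf : Computable f) (hinj : Function.Injective f)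
    {g : ℕ →. ℕ} (hg : Partrec g) : ∃ h : ℕ →. ℕ, Partrec h ∧ ∀ n, h (f n) = g n := by
  let preimage : ℕ →. ℕ := fun m => Nat.rfind fun k => Part.some (decide (f k = m))
  have hpreimage : Partrec preimage := by
    have hdec : Computable₂ fun m k : ℕ => decide (f k = m) :=
      (Primrec.eq.decide.to_comp).comp (hf.comp Computable.snd) Computable.fst
    exact Partrec.rfind hdec.partrec₂
  have hleft (n : ℕ) : preimage (f n) = Part.some n := by
    refine Part.eq_some_iff.2 (Nat.mem_rfind.2 ⟨by simp, fun hm => ?_⟩)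
    simpa using fun h => hm.ne (hinj h)
  refine ⟨fun m => (preimage m).bind g, hpreimage.bind (hg.comp Computable.snd), fun n => ?_⟩
  exact (congrArg (·.bind g) (hleft n)).trans (Part.bind_some _ _)

theorem exists_partrec_not_computablePred_dom_two_pow :
    ∃ h : ℕ →. ℕ, Partrec h ∧ ¬ ComputablePred fun n : ℕ => (h (2 ^ n)).Dom := by
  have hpow : Computable fun n : ℕ => 2 ^ n :=
    ((Primrec₂.unpaired'.1 Nat.Primrec.pow).comp (.const 2) .id).to_comp
  have heval : Partrec fun n : ℕ => (Denumerable.ofNat Nat.Partrec.Code n).eval 0 :=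
    Nat.Partrec.Code.eval_part.comp (Computable.ofNat _) (Computable.const 0)
  obtain ⟨h, hh, heq⟩ := exists_partrec_apply_eq hpow (Nat.pow_right_injective le_rfl) heval
  refine ⟨h, hh, fun hc => ComputablePred.halting_problem 0 ?_⟩
  refine ComputablePred.computable_of_manyOneReducible ⟨_, Computable.encode, fun c => ?_⟩ hc
  rw [heq, Denumerable.ofNat_encode]

theorem trNat_two_pow (n : ℕ) :
    trNat (2 ^ n) = List.replicate n Γ'.bit0 ++ [Γ'.bit1] := by
  suffices h : ∃ p : PosNum, ((2 ^ n : ℕ) : Num) = Num.pos p ∧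
      trPosNum p = List.replicate n Γ'.bit0 ++ [Γ'.bit1] by
    obtain ⟨p, hp, htr⟩ := h
    rw [trNat, hp]
    exact htr
  induction n with
  | zero => exact ⟨1, rfl, rfl⟩
  | succ n ih =>
    obtain ⟨p, hp, htr⟩ := ih
    refine ⟨p.bit0, ?_, by rw [trPosNum, htr, List.replicate_succ, List.cons_append]⟩
    rw [pow_succ, mul_two, Nat.cast_add, hp]
    exact Num.bit0_of_bit0 (.pos p)

/-- The one-tape symbol holding `a` on the main stack and nothing on the other stacks, in
Mathlib's simulation of the four-stack machine `Turing.PartrecToTM2.tr`. -/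
def mainSymbol (bottom : Bool) (a : PartrecToTM2.Γ') : TM2to1.Γ' K' fun _ => PartrecToTM2.Γ' :=
  (bottom, Function.update (fun _ => none) K'.main (some a))

theorem trInit_trList_two_pow (n : ℕ) :
    TM2to1.trInit (Γ := fun _ => PartrecToTM2.Γ') K'.main (trList [2 ^ n]) =
      mainSymbol true .cons :: mainSymbol false .bit1 ::
        List.replicate n (mainSymbol false .bit0) := by
  have hrev : (trList [2 ^ n]).reverse = .cons :: .bit1 :: List.replicate n .bit0 := by
    simp [trList, trNat_two_pow]
  rw [← List.map_replicate]
  exact congrArg (fun l => (true, l.headI.2) :: l.tail)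
    (congrArg (List.map (mainSymbol false)) hrev)

theorem tm2_init_main_eq_init (code : ToPartrec.Code) (v : List ℕ)
    [Inhabited PartrecToTM2.Λ'] (hdef : (default : PartrecToTM2.Λ') = trNormal code .halt) :
    (TM2.init K'.main (trList v) : TM2.Cfg (fun _ : K' => PartrecToTM2.Γ') _ _) =
      PartrecToTM2.init code v := by
  simp only [TM2.init, PartrecToTM2.init, hdef]
  congr 1
  funext k
  cases k <;> rfl

instance : Fintype K' :=
  ⟨{K'.main, K'.rev, K'.aux, K'.stack}, by rintro (_ | _ | _ | _) <;> simp⟩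

theorem exists_supports_not_computablePred_halts :
    ∃ (Γ Λ : Type) (_ : Inhabited Γ) (_ : Inhabited Λ) (_ : Fintype Γ)
      (M : TM0.Machine Γ Λ) (S : Finset Λ) (x y c : Γ), TM0.Supports M (S : Set Λ) ∧
      ¬ ComputablePred fun n : ℕ => (TM0.eval M (x :: y :: List.replicate n c)).Dom := by
  classical
  obtain ⟨h, hh, hu⟩ := exists_partrec_not_computablePred_dom_two_pow
  obtain ⟨code, hcode⟩ := ToPartrec.Code.exists_code (Nat.Partrec'.part_iff₁.2 hh)
  let _ : Inhabited PartrecToTM2.Λ' := ⟨trNormal code .halt⟩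
  let M₂ : PartrecToTM2.Λ' → TM2.Stmt (fun _ : K' => PartrecToTM2.Γ') _ _ := PartrecToTM2.tr
  have hsupp : TM2.Supports M₂ _ := tr_supports code .halt
  refine ⟨_, _, inferInstance, inferInstance, inferInstance, _, _, mainSymbol true .cons,
    mainSymbol false .bit1, mainSymbol false .bit0,
    TM1to0.tr_supports _ (TM2to1.tr_supports _ hsupp), fun hc => hu (hc.of_eq fun n => ?_)⟩
  have hinit : TM2.init K'.main (trList [2 ^ n]) = PartrecToTM2.init code [2 ^ n] :=
    tm2_init_main_eq_init code _ rfl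
  have hdom : (TM2.eval M₂ K'.main (trList [2 ^ n])).Dom ↔ (code.eval [2 ^ n]).Dom := by
    refine (iff_of_eq (congrArg (fun s => (StateTransition.eval (TM2.step M₂) s).Dom) hinit)).trans
      ?_
    rw [PartrecToTM2.tr_eval]
    rfl
  rw [← trInit_trList_two_pow, TM1to0.tr_eval]
  refine (TM2to1.tr_eval_dom _ _ _).trans (hdom.trans ?_)
  rw [hcode ⟨[2 ^ n], rfl⟩]
  rfl

variable {Γ Λ : Type} [Inhabited Γ] [Inhabited Λ]

open Classical in
/-- The restriction of a Turing machine to a set `S` of labels; transitions leaving `S` are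
redirected to the default label, which does not matter when `S` supports the machine. -/
noncomputable def restrictLabels (M : TM0.Machine Γ Λ) (S : Finset Λ) [Inhabited S] :
    TM0.Machine Γ S :=
  fun q a => (M q a).map fun p => (if h : p.1 ∈ S then ⟨p.1, h⟩ else default, p.2)

theorem respects_restrictLabels {M : TM0.Machine Γ Λ} {S : Finset Λ} [Inhabited S]
    (hS : TM0.Supports M (S : Set Λ)) :
    StateTransition.Respects (TM0.step (restrictLabels M S)) (TM0.step M)
      fun c d => (c.q : Λ) = d.q ∧ c.Tape = d.Tape := by
  rintro ⟨q, t⟩ ⟨_, _⟩ ⟨rfl, rfl⟩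
  cases hm : M q t.head with
  | none => simp [TM0.step, restrictLabels, hm]
  | some p =>
    have hp : p.1 ∈ S := hS.2 (Option.mem_def.2 hm) q.2
    simp only [TM0.step, restrictLabels, hm, Option.map_some, hp, dif_pos]
    refine ⟨⟨p.1, _⟩, ⟨rfl, rfl⟩, Relation.TransGen.single ?_⟩
    simp only [TM0.step, hm]
    rfl

theorem exists_finite_not_computablePred_halts :
    ∃ (Γ Λ : Type) (_ : Inhabited Γ) (_ : Inhabited Λ) (_ : Fintype Γ) (_ : Fintype Λ)
      (M : TM0.Machine Γ Λ) (x y c : Γ),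
      ¬ ComputablePred fun n : ℕ =>
        (StateTransition.eval (TM0.step M) (TM0.init (x :: y :: List.replicate n c))).Dom := by
  obtain ⟨Γ, Λ, _, _, _, M, S, x, y, c, hS, hM⟩ := exists_supports_not_computablePred_halts
  let _ : Inhabited S := ⟨⟨default, hS.1⟩⟩
  refine ⟨Γ, S, inferInstance, inferInstance, inferInstance, inferInstance, restrictLabels M S,
    x, y, c, fun hc => hM (hc.of_eq fun n => ?_)⟩
  exact (StateTransition.tr_eval_dom (respects_restrictLabels hS) ⟨rfl, rfl⟩).symm

end TuringMachines

section QueueMachines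

open StateTransition Relation

/-- A queue machine with states `Q` and letters `A`: in state `q` it removes the first letter `a`
of its queue and, unless it halts (`none`), changes state and appends a word to the queue. -/
abbrev QueueMachine (Q A : Type) := Q → A → Option (Q × List A)

namespace QueueMachine

variable {Q A : Type} (M : QueueMachine Q A)

/-- One step of a queue machine. It also halts when its queue is empty. -/
def step : Q × List A → Option (Q × List A)
  | (_, []) => none
  | (q, a :: w) => (M q a).map fun p => (p.1, w ++ p.2)

/-- The total machine that erases its queue, in the additional state `none`, once `M` has
halted. -/
def flush : Option Q → A → Option Q × List A
  | none, _ => (none, [])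
  | some q, a => ((M q a).map fun p => (some p.1, p.2)).getD (none, [])

end QueueMachine

/-- One step of the total queue machine with transition function `f`. -/
def queueStep {P A : Type} (f : P → A → P × List A) : P × List A → P × List A
  | (p, []) => (p, [])
  | (p, a :: w) => ((f p a).1, w ++ (f p a).2)

namespace QueueMachine

variable {Q A : Type} (M : QueueMachine Q A)

theorem queueStep_flush_of_step_eq_some {c d : Q × List A} (h : M.step c = some d) :
    queueStep M.flush (some c.1, c.2) = (some d.1, d.2) := by
  obtain ⟨q, _ | ⟨a, w⟩⟩ := c
  · cases h
  · obtain ⟨p, hp, rfl⟩ := Option.map_eq_some_iff.1 h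
    simp [queueStep, flush, hp]

theorem iterate_queueStep_flush_none (w : List A) :
    (queueStep M.flush)^[w.length] (none, w) = (none, []) := by
  induction w with
  | nil => rfl
  | cons a w ih => simpa [queueStep, flush] using ih

theorem exists_iterate_queueStep_flush_of_step_eq_none {c : Q × List A} (h : M.step c = none) :
    ∃ k, ((queueStep M.flush)^[k] (some c.1, c.2)).2 = [] := by
  obtain ⟨q, _ | ⟨a, w⟩⟩ := c
  · exact ⟨0, rfl⟩
  · refine ⟨w.length + 1, ?_⟩
    have hstep : queueStep M.flush (some q, a :: w) = (none, w) := by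
      simp [queueStep, flush, Option.map_eq_none_iff.1 h]
    rw [Function.iterate_succ_apply, hstep, iterate_queueStep_flush_none]

theorem eval_step_dom_iff (c : Q × List A) :
    (eval M.step c).Dom ↔ ∃ k, ((queueStep M.flush)^[k] (some c.1, c.2)).2 = [] := by
  constructor
  · intro h
    obtain ⟨d, hd⟩ := Part.dom_iff_mem.1 h
    obtain ⟨hreach, hhalt⟩ := mem_eval.1 hd
    clear h hd
    induction hreach using ReflTransGen.head_induction_on with
    | refl => exact M.exists_iterate_queueStep_flush_of_step_eq_none hhalt
    | head hstep _ ih =>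
      obtain ⟨k, hk⟩ := ih
      exact ⟨k + 1, by
        rw [Function.iterate_succ_apply, M.queueStep_flush_of_step_eq_some hstep, hk]⟩
  · rintro ⟨k, hk⟩
    induction k generalizing c with
    | zero =>
      obtain ⟨q, w⟩ := c
      obtain rfl : w = [] := hk
      exact Part.dom_iff_mem.2 ⟨_, mem_eval.2 ⟨.refl, rfl⟩⟩
    | succ k ih =>
      cases hstep : M.step c with
      | none => exact Part.dom_iff_mem.2 ⟨c, mem_eval.2 ⟨.refl, hstep⟩⟩
      | some d =>
        rw [Function.iterate_succ_apply, M.queueStep_flush_of_step_eq_some hstep] at hk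
        rw [reaches_eval (ReflTransGen.single hstep)]
        exact ih d hk

end QueueMachine

end QueueMachines

section TuringMachineSimulation

open Turing StateTransition Relation

/-- Letters of the queue machine simulating a Turing machine: the queue is the tape read
cyclically, with the scanned cell marked `head` and a `fence` at its right end. -/
inductive Letter (Γ : Type) : Type
  | cell (g : Γ)
  | head (g : Γ)
  | fence
  deriving Fintype

/-- Control states of the queue machine simulating a Turing machine in state `q`. In `seek q p` it
looks for the head and holds back the last cell `p`, in `markNext q` it puts the head on
the next cell, and in `rewind q` it goes on to the fence. -/
inductive Ctl (Γ Λ : Type) : Type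
  | seek (q : Λ) (p : Option Γ)
  | markNext (q : Λ)
  | rewind (q : Λ)
  deriving Fintype

theorem reaches_of_step {σ : Type*} {f : σ → Option σ} {a b c : σ} (hab : f a = some b)
    (hbc : Reaches f b c) : Reaches f a c :=
  ReflTransGen.head hab hbc

theorem reaches₁_of_step {σ : Type*} {f : σ → Option σ} {a b c : σ} (hab : f a = some b)
    (hbc : Reaches f b c) : Reaches₁ f a c :=
  TransGen.head' hab hbc

theorem map_cell_tail_reverse_append_head? {Γ : Type} (L : List Γ) :
    L.tail.reverse.map Letter.cell ++ L.head?.toList.map Letter.cell =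
      L.reverse.map Letter.cell := by
  cases L <;> simp

variable {Γ Λ : Type} [Inhabited Γ] [Inhabited Λ]

/-- How the simulator, holding back the cell `p` and reading the head on `g`, carries out an
instruction of the Turing machine. -/
def simulatorAct (p : Option Γ) (g : Γ) : Λ × TM0.Stmt Γ → Ctl Γ Λ × List (Letter Γ)
  | (q, .write b) => (.rewind q, p.toList.map .cell ++ [.head b])
  | (q, .move .left) => (.rewind q, [.head (p.getD default), .cell g])
  | (q, .move .right) => (.markNext q, p.toList.map .cell ++ [.cell g])

/-- The queue machine simulating a Turing machine. -/
def simulator (M : TM0.Machine Γ Λ) : QueueMachine (Ctl Γ Λ) (Letter Γ)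
  | .seek q p, .cell g => some (.seek q (some g), p.toList.map .cell)
  | .seek q p, .head g => (M q g).map (simulatorAct p g)
  | .markNext q, .cell g => some (.rewind q, [.head g])
  | .markNext q, .fence => some (.seek q none, [.head default, .fence])
  | .rewind q, .cell g => some (.rewind q, [.cell g])
  | .rewind q, .fence => some (.seek q none, [.fence])
  | _, _ => none

/-- The configuration of the simulator about to read the head, for the Turing machine in state `q`
scanning `h`, with `L` to its left (nearest cell first) and `R` to its right. -/
def simulatorCfg (q : Λ) (L : List Γ) (h : Γ) (R : List Γ) : Ctl Γ Λ × List (Letter Γ) :=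
  (.seek q L.head?, .head h :: (R.map .cell ++ .fence :: L.tail.reverse.map .cell))

variable (M : TM0.Machine Γ Λ)

theorem reaches_seek_some (q : Λ) (p r : Γ) (L : List Γ) (w : List (Letter Γ)) :
    Reaches (simulator M).step (.seek q (some p), L.map .cell ++ .cell r :: w)
      (.seek q (some r), w ++ (p :: L).map .cell) := by
  induction L generalizing p w with
  | nil => exact .single (by simp [QueueMachine.step, simulator])
  | cons a L ih =>
    refine reaches_of_step
      (b := (.seek q (some a), L.map .cell ++ .cell r :: (w ++ [.cell p])))
      (by simp [QueueMachine.step, simulator]) ?_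
    rw [List.map_cons, List.append_cons w _ ((a :: L).map .cell)]
    exact ih a (w ++ [.cell p])

theorem reaches_seek_none (q : Λ) (L : List Γ) (w : List (Letter Γ)) :
    Reaches (simulator M).step (.seek q none, L.reverse.map .cell ++ w)
      (.seek q L.head?, w ++ L.tail.reverse.map .cell) := by
  rcases L with _ | ⟨r, L⟩
  · rw [List.head?_nil, List.tail_nil, List.reverse_nil, List.map_nil, List.nil_append,
      List.append_nil]
    exact .refl
  · rw [List.head?_cons, List.tail_cons, List.reverse_cons]
    rcases L.reverse with _ | ⟨p, L'⟩
    · exact .single (by simp [QueueMachine.step, simulator])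
    · refine reaches_of_step rfl ?_
      simpa [simulator] using reaches_seek_some M q p r L' w

theorem reaches_rewind (q : Λ) (R : List Γ) (w : List (Letter Γ)) :
    Reaches (simulator M).step (.rewind q, R.map .cell ++ .fence :: w)
      (.seek q none, w ++ R.map .cell ++ [.fence]) := by
  induction R generalizing w with
  | nil => exact .single (by simp [QueueMachine.step, simulator])
  | cons r R ih =>
    refine reaches_of_step (b := (.rewind q, R.map .cell ++ .fence :: (w ++ [.cell r])))
      (by simp [QueueMachine.step, simulator]) ?_
    rw [List.map_cons, List.append_cons w _ (R.map .cell)]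
    exact ih (w ++ [.cell r])

theorem reaches_simulatorCfg (q : Λ) (L : List Γ) (h : Γ) (S R : List Γ) :
    Reaches (simulator M).step
      (.rewind q, R.map .cell ++ .fence :: (L.reverse.map .cell ++ .head h :: S.map .cell))
      (simulatorCfg q L h (S ++ R)) := by
  have hseek := reaches_seek_none M q L (.head h :: (S ++ R).map .cell ++ [.fence])
  refine (reaches_rewind M q R _).trans ?_
  simpa [simulatorCfg, Reaches] using hseek

theorem step_simulatorCfg {q : Λ} {h : Γ} {p : Λ × TM0.Stmt Γ} (hM : M q h = some p)
    (L R : List Γ) :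
    (simulator M).step (simulatorCfg q L h R) =
      some ((simulatorAct L.head? h p).1, R.map .cell ++ .fence :: L.tail.reverse.map .cell ++
        (simulatorAct L.head? h p).2) := by
  simp only [simulatorCfg, QueueMachine.step, simulator, hM, Option.map_some]

theorem reaches_simulatorCfg_of_write {q q' : Λ} {h b : Γ} (hM : M q h = some (q', .write b))
    (L R : List Γ) :
    Reaches₁ (simulator M).step (simulatorCfg q L h R) (simulatorCfg q' L b R) := by
  refine reaches₁_of_step (step_simulatorCfg M hM L R) ?_
  simpa [← map_cell_tail_reverse_append_head? L, simulatorAct] using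
    reaches_simulatorCfg M q' L b [] R

theorem reaches_simulatorCfg_of_move_left {q q' : Λ} {h : Γ} (hM : M q h = some (q', .move .left))
    (L R : List Γ) :
    Reaches₁ (simulator M).step (simulatorCfg q L h R)
      (simulatorCfg q' L.tail L.headI (h :: R)) := by
  refine reaches₁_of_step (step_simulatorCfg M hM L R) ?_
  have hrewind := reaches_simulatorCfg M q' L.tail L.headI [h] R
  cases L <;> simpa [simulatorAct] using hrewind

theorem reaches_simulatorCfg_of_move_right {q q' : Λ} {h : Γ}
    (hM : M q h = some (q', .move .right)) (L R : List Γ) :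
    Reaches₁ (simulator M).step (simulatorCfg q L h R)
      (simulatorCfg q' (h :: L) R.headI R.tail) := by
  refine reaches₁_of_step (step_simulatorCfg M hM L R) ?_
  rcases R with _ | ⟨r, R⟩ <;> refine reaches_of_step rfl ?_
  · simpa [← map_cell_tail_reverse_append_head? L, simulatorCfg, simulatorAct] using
      reaches_seek_none M q' (h :: L) [.head default, .fence]
  · simpa [← map_cell_tail_reverse_append_head? L, simulatorAct] using
      reaches_simulatorCfg M q' (h :: L) r [] R

theorem respects_simulator :
    Respects (TM0.step M) (simulator M).step fun c d =>
      ∃ q L h R, c = ⟨q, ⟨h, ListBlank.mk L, ListBlank.mk R⟩⟩ ∧ d = simulatorCfg q L h R := by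
  rintro _ _ ⟨q, L, h, R, rfl, rfl⟩
  rcases hM : M q h with _ | ⟨q', ⟨_ | _⟩ | ⟨b⟩⟩
  · simp [TM0.step, hM, simulatorCfg, QueueMachine.step, simulator]
  · simp only [TM0.step, hM, Option.map_some]
    exact ⟨_, ⟨q', _, _, _, rfl, rfl⟩, reaches_simulatorCfg_of_move_left M hM L R⟩
  · simp only [TM0.step, hM, Option.map_some]
    exact ⟨_, ⟨q', _, _, _, rfl, rfl⟩, reaches_simulatorCfg_of_move_right M hM L R⟩
  · simp only [TM0.step, hM, Option.map_some]
    exact ⟨_, ⟨q', _, _, _, rfl, rfl⟩, reaches_simulatorCfg_of_write M hM L R⟩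

theorem eval_simulator_dom_iff (g : Γ) (R : List Γ) :
    (eval (simulator M).step (simulatorCfg default [] g R)).Dom ↔
      (eval (TM0.step M) (TM0.init (g :: R))).Dom :=
  tr_eval_dom (respects_simulator M) ⟨default, [], g, R, rfl, rfl⟩

end TuringMachineSimulation

theorem exists_queueStep_not_computablePred_empties :
    ∃ (P A : Type) (_ : Fintype P) (_ : Fintype A) (f : P → A → P × List A)
      (p : P) (x y c e : A),
      ¬ ComputablePred fun n : ℕ =>
        ∃ k, ((queueStep f)^[k] (p, x :: y :: (List.replicate n c ++ [e]))).2 = [] := by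
  obtain ⟨Γ, Λ, _, _, _, _, M, x, y, c, hM⟩ := exists_finite_not_computablePred_halts
  refine ⟨Option (Ctl Γ Λ), Letter Γ, inferInstance, inferInstance, (simulator M).flush,
    some (.seek default none), .head x, .cell y, .cell c, .fence,
    fun hc => hM (hc.of_eq fun n => ?_)⟩
  rw [← eval_simulator_dom_iff, QueueMachine.eval_step_dom_iff]
  simp [simulatorCfg]

open Matrix
open scoped Kronecker

theorem vecMul_prod_map_append_singleton {ι R S : Type*} [Fintype ι] [DecidableEq ι] [Semiring S]
    (M : R → Matrix ι ι S) (v : ι → S) (w : List R) (r : R) :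
    v ᵥ* ((w ++ [r]).map M).prod = v ᵥ* (w.map M).prod ᵥ* M r := by
  simp [vecMul_vecMul]

section Codes

variable {P A : Type}

/-- The number of a control state, less than `card P`. -/
noncomputable def stateCode [Fintype P] (p : P) : ℕ := Fintype.equivFin P p

/-- The number of the first letter of a queue; `none` stands for the empty queue and is the only
letter of number `0`. -/
noncomputable def letterCode [Fintype A] : Option A → ℕ
  | none => 0
  | some a => Fintype.equivFin A a + 1

theorem stateCode_lt [Fintype P] (p : P) : stateCode p < Fintype.card P :=
  (Fintype.equivFin P p).isLt

theorem stateCode_injective [Fintype P] : Function.Injective (stateCode (P := P)) :=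
  Fin.val_injective.comp (Fintype.equivFin P).injective

theorem letterCode_le [Fintype A] : ∀ r : Option A, letterCode r ≤ Fintype.card A
  | none => Nat.zero_le _
  | some a => (Fintype.equivFin A a).isLt

theorem letterCode_injective [Fintype A] : Function.Injective (letterCode (A := A))
  | none, none, _ => rfl
  | some a, some b, h => by
    rw [(Fintype.equivFin A).injective (Fin.ext (Nat.succ_injective h))]

variable [Fintype P] [Fintype A]

variable (P A) in
/-- The base in which queues are read as numbers. It exceeds every `headCode`. -/
def base : ℕ := Fintype.card P * (Fintype.card A + 1)

/-- The number of what a queue automaton sees in one step: its state and the first letter of the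
queue, if any. -/
noncomputable def headCode (h : P × Option A) : ℕ :=
  stateCode h.1 + Fintype.card P * letterCode h.2

variable (P) in
/-- The number whose digits are the letters of a queue, least significant digit first. -/
noncomputable def queueCode (w : List A) : ℕ :=
  Nat.ofDigits (base P A) (w.map fun a => letterCode (some a))

/-- The number of a configuration; its last digit in base `base P A` is a `headCode`. -/
noncomputable def cfgCode (c : P × List A) : ℕ :=
  stateCode c.1 + Fintype.card P * queueCode P c.2

theorem headCode_lt (h : P × Option A) : headCode h < base P A :=
  calc headCode h < Fintype.card P + Fintype.card P * letterCode h.2 :=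
        Nat.add_lt_add_right (stateCode_lt h.1) _
    _ ≤ Fintype.card P + Fintype.card P * Fintype.card A := by gcongr; exact letterCode_le h.2
    _ = base P A := by rw [base]; ring

theorem headCode_injective : Function.Injective (headCode (P := P) (A := A)) := by
  rintro ⟨p, r⟩ ⟨q, s⟩ h
  have hcard : 0 < Fintype.card P := Fintype.card_pos_iff.2 ⟨p⟩
  have hstate := congrArg (· % Fintype.card P) h
  have hletter := congrArg (· / Fintype.card P) h
  simp only [headCode, Nat.add_mul_mod_self_left, Nat.mod_eq_of_lt (stateCode_lt _)] at hstate
  simp only [headCode, Nat.add_mul_div_left _ _ hcard, Nat.div_eq_of_lt (stateCode_lt _),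
    zero_add] at hletter
  rw [stateCode_injective hstate, letterCode_injective hletter]

variable (P) in
theorem queueCode_cons (a : A) (w : List A) :
    queueCode P (a :: w) = letterCode (some a) + base P A * queueCode P w :=
  Nat.ofDigits_cons

variable (P) in
theorem queueCode_append (w u : List A) :
    queueCode P (w ++ u) = queueCode P w + base P A ^ w.length * queueCode P u := by
  simp [queueCode, Nat.ofDigits_append]

theorem cfgCode_cons (p : P) (a : A) (w : List A) :
    cfgCode (p, a :: w) = headCode (p, some a) + base P A * (Fintype.card P * queueCode P w) := by
  simp only [cfgCode, headCode, queueCode_cons]; ring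

theorem cfgCode_modEq_headCode : ∀ c : P × List A,
    cfgCode c ≡ headCode (c.1, c.2.head?) [MOD base P A]
  | (p, []) => by simp [cfgCode, headCode, queueCode, letterCode, Nat.ModEq]
  | (p, a :: w) => by simp [cfgCode_cons, Nat.ModEq]

theorem eq_head_of_headCode_modEq_cfgCode {h : P × Option A} {c : P × List A}
    (hc : headCode h ≡ cfgCode c [MOD base P A]) : h = (c.1, c.2.head?) :=
  headCode_injective <|
    (hc.trans (cfgCode_modEq_headCode c)).eq_of_lt_of_lt (headCode_lt _) (headCode_lt _)

theorem cfgCode_pos : ∀ {c : P × List A}, c.2 ≠ [] → 0 < cfgCode c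
  | (p, a :: w), _ => by
    have hcard : 0 < Fintype.card P := Fintype.card_pos_iff.2 ⟨p⟩
    simp only [cfgCode, queueCode_cons, letterCode]
    positivity

end Codes

theorem queueStep_of_eq_nil {P A : Type} (f : P → A → P × List A) :
    ∀ {c : P × List A}, c.2 = [] → queueStep f c = c
  | (_, []), _ => rfl

section Tracking

variable {P A : Type} [Fintype P] [Fintype A]

/-- The tracking vector `![1, x, y, b ^ m, b ^ (m + length)]` of a configuration `c` after `m`
steps in base `b = base P A`: the number `y` holds the head codes of the `m` steps so far, and `x`
has in addition `cfgCode c` from position `m` on. -/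
noncomputable def trackVec (m y : ℕ) (c : P × List A) : Fin 5 → ℕ :=
  ![1, y + base P A ^ m * cfgCode c, y, base P A ^ m, base P A ^ (m + c.2.length)]

/-- The update of tracking vectors which appends the letters `w` to the queue, puts the state of
number `push` behind the digit now completed and claims that the latter is `headCode h`. -/
noncomputable def claimMatrix (h : P × Option A) (push : ℕ) (w : List A) :
    Matrix (Fin 5) (Fin 5) ℕ :=
  !![1, 0, 0, 0, 0;
    0, 1, 0, 0, 0;
    0, 0, 1, 0, 0;
    0, base P A * push, headCode h, base P A, 0;
    0, Fintype.card P * queueCode P w, 0, 0, base P A ^ w.length]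

theorem vecMul_claimMatrix (v : Fin 5 → ℕ) (h : P × Option A) (push : ℕ) (w : List A) :
    v ᵥ* claimMatrix h push w =
      ![v 0, v 1 + v 3 * (base P A * push) + v 4 * (Fintype.card P * queueCode P w),
        v 2 + v 3 * headCode h, v 3 * base P A, v 4 * base P A ^ w.length] := by
  funext j
  fin_cases j <;> simp [claimMatrix, vecMul, dotProduct, Fin.sum_univ_five]

/-- The matrix of a guess of what the queue automaton `f` sees: `(p, some a)` simulates one step
of the automaton, `(p, none)` claims that it has stopped. -/
noncomputable def guessMatrix (f : P → A → P × List A) (h : P × Option A) :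
    Matrix (Fin 5) (Fin 5) ℕ :=
  claimMatrix h (h.2.elim 0 fun a => stateCode (f h.1 a).1) (h.2.elim [] fun a => (f h.1 a).2)

theorem trackVec_vecMul_guessMatrix (f : P → A → P × List A) (m y : ℕ) :
    ∀ {c : P × List A}, c.2 ≠ [] → trackVec m y c ᵥ* guessMatrix f (c.1, c.2.head?) =
      trackVec (m + 1) (y + base P A ^ m * headCode (c.1, c.2.head?)) (queueStep f c)
  | (p, a :: w), _ => by
    rw [guessMatrix, vecMul_claimMatrix, trackVec, cfgCode_cons]
    funext j
    fin_cases j <;> simp [trackVec, queueStep, cfgCode, queueCode_append] <;> ring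

theorem trackVec_nil_vecMul_guessMatrix (f : P → A → P × List A) (m y : ℕ) (p : P) :
    (trackVec m y (p, ([] : List A)) ᵥ* guessMatrix f (p, none)) 1 =
      (trackVec m y (p, ([] : List A)) ᵥ* guessMatrix f (p, none)) 2 := by
  simp [guessMatrix, vecMul_claimMatrix, trackVec, cfgCode, headCode, letterCode, queueCode]

/-- A tracking vector whose two numbers already differ in their first digits, which no further
update changes. -/
def Diverged (b : ℕ) (v : Fin 5 → ℕ) : Prop :=
  ∃ m, b ^ m ∣ v 3 ∧ b ^ m ∣ v 4 ∧ ¬ v 1 ≡ v 2 [MOD b ^ m]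

theorem Diverged.ne {b : ℕ} {v : Fin 5 → ℕ} : Diverged b v → v 1 ≠ v 2
  | ⟨_, _, _, hne⟩, h => hne (h ▸ Nat.ModEq.refl _)

theorem Diverged.claim {v : Fin 5 → ℕ} (hv : Diverged (base P A) v)
    (h : P × Option A) (push : ℕ) (w : List A) :
    Diverged (base P A) (v ᵥ* claimMatrix h push w) := by
  obtain ⟨m, h3, h4, hne⟩ := hv
  rw [vecMul_claimMatrix]
  refine ⟨m, h3.mul_right _, h4.mul_right _, fun heq => hne ?_⟩
  have h3' (k : ℕ) : v 3 * k ≡ 0 [MOD base P A ^ m] := Nat.modEq_zero_iff_dvd.2 (h3.mul_right k)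
  have h4' (k : ℕ) : v 4 * k ≡ 0 [MOD base P A ^ m] := Nat.modEq_zero_iff_dvd.2 (h4.mul_right k)
  simpa using (((Nat.ModEq.refl (v 1)).add (h3' _)).add (h4' _)).symm.trans
    (heq.trans ((Nat.ModEq.refl (v 2)).add (h3' _)))

theorem diverged_trackVec_vecMul_claimMatrix {m y push : ℕ} {c : P × List A} (hc : c.2 ≠ [])
    {h : P × Option A} (hne : h ≠ (c.1, c.2.head?)) (w : List A) :
    Diverged (base P A) (trackVec m y c ᵥ* claimMatrix h push w) := by
  obtain ⟨l, hl⟩ := Nat.exists_eq_succ_of_ne_zero (mt List.length_eq_zero_iff.1 hc)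
  rw [vecMul_claimMatrix]
  refine ⟨m + 1, (pow_succ _ _).dvd, ?_, fun heq => hne (eq_head_of_headCode_modEq_cfgCode ?_)⟩
  · exact (pow_dvd_pow _ (by lia)).mul_right _
  · have hB : base P A ^ m ≠ 0 := (pow_pos ((Nat.zero_le _).trans_lt (headCode_lt h)) m).ne'
    refine (Nat.ModEq.mul_left_cancel' hB (Nat.ModEq.add_left_cancel' y ?_)).symm
    have hpush : base P A ^ m * (base P A * push) ≡ 0 [MOD base P A ^ (m + 1)] :=
      Nat.modEq_zero_iff_dvd.2 ⟨push, by ring⟩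
    have happend (k : ℕ) : base P A ^ (m + c.2.length) * k ≡ 0 [MOD base P A ^ (m + 1)] :=
      Nat.modEq_zero_iff_dvd.2 ((pow_dvd_pow _ (by lia)).mul_right k)
    simpa [trackVec, pow_succ] using (((Nat.ModEq.refl _).add hpush).add (happend _)).symm.trans heq

theorem ne_or_exists_trackVec (f : P → A → P × List A) {c₀ : P × List A}
    (hc₀ : ∀ k, ((queueStep f)^[k] c₀).2 ≠ []) (w : List (P × Option A)) :
    Diverged (base P A) (trackVec 0 0 c₀ ᵥ* (w.map (guessMatrix f)).prod) ∨
      ∃ k m y, trackVec 0 0 c₀ ᵥ* (w.map (guessMatrix f)).prod =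
        trackVec m y ((queueStep f)^[k] c₀) := by
  induction w using List.reverseRecOn with
  | nil => exact .inr ⟨0, 0, 0, by simp⟩
  | append_singleton w h ih =>
    simp only [vecMul_prod_map_append_singleton]
    obtain hdiv | ⟨k, m, y, heq⟩ := ih
    · exact .inl (hdiv.claim _ _ _)
    · rw [heq]
      by_cases hh : h = (((queueStep f)^[k] c₀).1, ((queueStep f)^[k] c₀).2.head?)
      · refine .inr ⟨k + 1, m + 1, y + base P A ^ m * headCode h, ?_⟩
        rw [hh, trackVec_vecMul_guessMatrix f m y (hc₀ k), Function.iterate_succ_apply']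
      · exact .inl (diverged_trackVec_vecMul_claimMatrix (hc₀ k) hh _)

theorem exists_trackVec_vecMul_prod (f : P → A → P × List A) (c₀ : P × List A) (k : ℕ) :
    ∃ (w : List (P × Option A)) (m y : ℕ),
      trackVec 0 0 c₀ ᵥ* (w.map (guessMatrix f)).prod = trackVec m y ((queueStep f)^[k] c₀) := by
  induction k with
  | zero => exact ⟨[], 0, 0, by simp⟩
  | succ k ih =>
    obtain ⟨w, m, y, heq⟩ := ih
    rw [Function.iterate_succ_apply']
    by_cases hnil : ((queueStep f)^[k] c₀).2 = []
    · exact ⟨w, m, y, by rw [heq, queueStep_of_eq_nil f hnil]⟩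
    · let h := (((queueStep f)^[k] c₀).1, ((queueStep f)^[k] c₀).2.head?)
      refine ⟨w ++ [h], m + 1, y + base P A ^ m * headCode h, ?_⟩
      rw [vecMul_prod_map_append_singleton, heq, trackVec_vecMul_guessMatrix f m y hnil]

theorem exists_trackVec_eq_iff (f : P → A → P × List A) (c₀ : P × List A) :
    (∃ w : List (P × Option A), (trackVec 0 0 c₀ ᵥ* (w.map (guessMatrix f)).prod) 1 =
        (trackVec 0 0 c₀ ᵥ* (w.map (guessMatrix f)).prod) 2) ↔
      ∃ k, ((queueStep f)^[k] c₀).2 = [] := by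
  constructor
  · rintro ⟨w, hw⟩
    by_contra! hne
    obtain hdiv | ⟨k, m, y, heq⟩ := ne_or_exists_trackVec f hne w
    · exact hdiv.ne hw
    · have hB : 0 < base P A := (Nat.zero_le _).trans_lt (headCode_lt (c₀.1, none))
      rw [heq] at hw
      simp [trackVec, hB.ne', (cfgCode_pos (hne k)).ne'] at hw
  · rintro ⟨k, hk⟩
    obtain ⟨w, m, y, heq⟩ := exists_trackVec_vecMul_prod f c₀ k
    rw [show (queueStep f)^[k] c₀ = (((queueStep f)^[k] c₀).1, []) by rw [← hk]] at heq
    refine ⟨w ++ [(((queueStep f)^[k] c₀).1, none)], ?_⟩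
    simpa only [vecMul_prod_map_append_singleton, heq] using trackVec_nil_vecMul_guessMatrix f m y _

theorem trackVec_vecMul_prod_zero (f : P → A → P × List A) (c₀ : P × List A)
    (w : List (P × Option A)) : (trackVec 0 0 c₀ ᵥ* (w.map (guessMatrix f)).prod) 0 = 1 := by
  induction w using List.reverseRecOn with
  | nil => simp [trackVec]
  | append_singleton w h ih =>
    rw [vecMul_prod_map_append_singleton, guessMatrix, vecMul_claimMatrix]
    exact ih

end Tracking

/-- Vectors of natural numbers moved by one matrix for each letter, and two linear forms to be
compared, `final true` against `final false`. -/
structure WeightedPair (ι R : Type) where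
  trans : R → Matrix ι ι ℕ
  start : ι → ℕ
  final : Bool → ι → ℕ

section WeightedPair

variable {ι R : Type}

/-- A family of weighted pairs whose entries are all computable in the parameter. -/
structure ComputableFamily (W : ℕ → WeightedPair ι R) : Prop where
  trans : ∀ r i j, Computable fun n => (W n).trans r i j
  start : ∀ i, Computable fun n => (W n).start i
  final : ∀ m i, Computable fun n => (W n).final m i

/-- The tensor square of a vector. -/
def tensorSq (v : ι → ℕ) (p : ι × ι) : ℕ := v p.1 * v p.2

variable [Fintype ι]

theorem tensorSq_vecMul_kronecker (v : ι → ℕ) (M : Matrix ι ι ℕ) :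
    tensorSq v ᵥ* (M ⊗ₖ M) = tensorSq (v ᵥ* M) := by
  ext ⟨i, j⟩
  simp only [tensorSq, vecMul, dotProduct, Finset.sum_mul_sum, Fintype.sum_prod_type,
    kroneckerMap_apply]
  exact Finset.sum_congr rfl fun _ _ => Finset.sum_congr rfl fun _ _ => by ring

variable [DecidableEq ι]

/-- The value of a word under the form `final m`. -/
def WeightedPair.weight (W : WeightedPair ι R) (m : Bool) (w : List R) : ℕ :=
  W.start ᵥ* (w.map W.trans).prod ⬝ᵥ W.final m

theorem tensorSq_vecMul_prod (M : R → Matrix ι ι ℕ) (v : ι → ℕ) (w : List R) :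
    tensorSq v ᵥ* (w.map fun r => M r ⊗ₖ M r).prod = tensorSq (v ᵥ* (w.map M).prod) := by
  induction w using List.reverseRecOn with
  | nil => simp
  | append_singleton w r ih =>
    rw [vecMul_prod_map_append_singleton, ih, vecMul_prod_map_append_singleton,
      tensorSq_vecMul_kronecker]

end WeightedPair

theorem two_mul_sq_add_lt_iff (x y : ℕ) : 2 * x ^ 2 + 2 * y ^ 2 < 1 + 4 * (x * y) ↔ x = y := by
  constructor
  · intro h
    zify at h ⊢
    have : ((x : ℤ) - y) ^ 2 < 1 := by nlinarith
    exact sub_eq_zero.1 (pow_eq_zero_iff two_ne_zero |>.1 (le_antisymm (by lia) (sq_nonneg _)))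
  · rintro rfl
    lia

section Comparison

variable {P A : Type} [Fintype P] [Fintype A]

/-- The tensor square of the matrices tracking the queue automaton `f` from `c₀`, with forms
comparing `1 + 4 * x * y` against `2 * x ^ 2 + 2 * y ^ 2` for the two tracked numbers `x` and `y`:
the former is larger only if `x = y`. -/
noncomputable def queuePair (f : P → A → P × List A) (c₀ : P × List A) :
    WeightedPair (Fin 5 × Fin 5) (P × Option A) where
  trans h := guessMatrix f h ⊗ₖ guessMatrix f h
  start := tensorSq (trackVec 0 0 c₀)
  final m := if m then Pi.single (0, 0) 1 + Pi.single (1, 2) 4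
    else Pi.single (1, 1) 2 + Pi.single (2, 2) 2

theorem exists_queuePair_weight_lt_iff (f : P → A → P × List A) (c₀ : P × List A) :
    (∃ w, (queuePair f c₀).weight false w < (queuePair f c₀).weight true w) ↔
      ∃ k, ((queueStep f)^[k] c₀).2 = [] := by
  rw [← exists_trackVec_eq_iff]
  refine exists_congr fun w => ?_
  rw [← two_mul_sq_add_lt_iff]
  simp only [WeightedPair.weight, queuePair, tensorSq_vecMul_prod, if_true, Bool.false_eq_true,
    if_false, dotProduct_add, dotProduct_single, tensorSq, trackVec_vecMul_prod_zero]
  ring_nf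

theorem queueCode_replicate_append (n : ℕ) (c : A) (v : List A) :
    queueCode P (List.replicate n c ++ v) =
      (fun k => letterCode (some c) + base P A * k)^[n] (queueCode P v) := by
  induction n with
  | zero => rfl
  | succ n ih =>
    rw [List.replicate_succ, List.cons_append, queueCode_cons, ih, Function.iterate_succ_apply']

theorem primrec_cfgCode_replicate (p : P) (u v : List A) (c : A) :
    Primrec fun n : ℕ => cfgCode (p, u ++ (List.replicate n c ++ v)) := by
  have haffine (a b : ℕ) : Primrec fun k => a + b * k :=
    Primrec.nat_add.comp (.const a) (Primrec.nat_mul.comp (.const b) .id)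
  have hqueue : Primrec fun n : ℕ => queueCode P (List.replicate n c ++ v) := by
    simp only [queueCode_replicate_append]
    exact Primrec.nat_iterate .id (.const _) ((haffine _ _).comp .snd).to₂
  simp only [cfgCode, queueCode_append P u]
  exact (haffine _ _).comp ((haffine _ _).comp hqueue)

theorem computableFamily_queuePair (f : P → A → P × List A) (p : P) (u v : List A) (c : A) :
    ComputableFamily fun n => queuePair f (p, u ++ (List.replicate n c ++ v)) := by
  have hcode := (primrec_cfgCode_replicate p u v c).to_comp
  have hpow : Computable fun n => base P A ^ (u.length + (n + v.length)) :=
    ((Primrec₂.unpaired'.1 Nat.Primrec.pow).comp (.const _)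
      (Primrec.nat_add.comp (.const _) (Primrec.nat_add.comp .id (.const _)))).to_comp
  have htrack : ∀ i : Fin 5,
      Computable fun n => trackVec 0 0 (p, u ++ (List.replicate n c ++ v)) i := by
    simpa [trackVec, Fin.forall_fin_succ] using
      ⟨.const 1, hcode, .const 0, .const 1, hpow⟩
  exact ⟨fun _ _ _ => .const _, fun i => Primrec.nat_mul.to_comp.comp (htrack i.1) (htrack i.2),
    fun _ _ => .const _⟩

end Comparison

theorem exists_weightedPair_not_computablePred :
    ∃ (ι R : Type) (_ : Fintype ι) (_ : DecidableEq ι) (_ : Fintype R)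
      (W : ℕ → WeightedPair ι R), ComputableFamily W ∧
        ¬ ComputablePred fun n => ∃ w, (W n).weight false w < (W n).weight true w := by
  obtain ⟨P, A, _, _, f, p, x, y, c, e, hf⟩ := exists_queueStep_not_computablePred_empties
  refine ⟨_, _, inferInstance, inferInstance, inferInstance, _,
    computableFamily_queuePair f p [x, y] [e] c, ?_⟩
  simpa only [exists_queuePair_weight_lt_iff, List.cons_append, List.nil_append] using hf

open ProbabilityTheory Preorder

section Cylinders

variable {S A : Type}

theorem Cyl_append_singleton (l : List S) (t : S) :
    Cyl (l ++ [t]) = Cyl l ∩ {ρ | ρ l.length = t} := by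
  ext ρ
  simp only [Cyl, Fin.forall_iff, List.get_eq_getElem, Set.mem_ofPred_eq, Set.mem_inter_iff,
    List.length_append, List.length_singleton]
  refine ⟨fun h => ⟨fun i hi => ?_, ?_⟩, fun ⟨h, ht⟩ i hi => ?_⟩
  · rw [h i (by lia), List.getElem_append_left hi]
  · rw [h _ (Nat.lt_succ_self _), List.getElem_concat_length rfl]
  · obtain hil | rfl := Nat.lt_succ_iff_lt_or_eq.1 hi
    · rw [h i hil, List.getElem_append_left hil]
    · rw [ht, List.getElem_concat_length rfl]

theorem Cyl_ofFn {n : ℕ} (v : Fin n → S) :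
    Cyl (List.ofFn v) = (fun (ρ : ℕ → S) (i : Fin n) => ρ i) ⁻¹' {v} := by
  ext ρ
  simp only [Cyl, Fin.forall_iff, List.length_ofFn, List.get_ofFn, Set.mem_ofPred_eq,
    Set.mem_preimage, Set.mem_singleton_iff, funext_iff, Fin.cast_mk]

/-- The history up to time `n` as a list. -/
def historyList (n : ℕ) (x : Finset.Iic n → S) : List S :=
  List.ofFn fun i : Fin (n + 1) => x ⟨i, Finset.mem_Iic.2 (Nat.le_of_lt_succ i.2)⟩

theorem Cyl_historyList (n : ℕ) (x : Finset.Iic n → S) :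
    Cyl (historyList n x) = (frestrictLe (π := fun _ => S) n) ⁻¹' {x} := by
  ext ρ
  simp only [historyList, Cyl_ofFn, Set.mem_preimage, Set.mem_singleton_iff, funext_iff,
    Fin.forall_iff, Subtype.forall, frestrictLe_apply, Finset.mem_Iic, Nat.lt_succ_iff]

theorem listProb_append_singleton (δ : S → A → S → ℝ≥0∞) (σ : List S → A → ℝ≥0∞) (t : S) :
    ∀ (hist : List S) (cur : S) (rest : List S),
      listProb δ σ hist cur (rest ++ [t]) = listProb δ σ hist cur rest *
        ∑' a, σ (hist ++ cur :: rest) a * δ ((cur :: rest).getLast (by simp)) a t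
  | hist, cur, [] => by simp [listProb]
  | hist, cur, b :: rest => by
    rw [List.cons_append, listProb, listProb, listProb_append_singleton, mul_assoc]
    simp

/-- `P` is the law of the plays from `s` under the strategy `σ`. -/
structure IsPlayLaw [MeasurableSpace S] (δ : S → A → S → ℝ≥0∞) (σ : List S → A → ℝ≥0∞) (s : S)
    (P : Measure (ℕ → S)) : Prop where
  isProbabilityMeasure : IsProbabilityMeasure P
  measure_Cyl_cons : ∀ l, P (Cyl (s :: l)) = listProb δ σ [] s l

end Cylinders

section Existence

variable {S A : Type} [MeasurableSpace S] [MeasurableSingletonClass S]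

theorem traj_Cyl_historyList_append [Countable S] (κ : ∀ n, Kernel (Finset.Iic n → S) S)
    [∀ n, IsMarkovKernel (κ n)] (x₀ : Finset.Iic 0 → S) (n : ℕ) (x : Finset.Iic n → S) (t : S) :
    Kernel.traj (X := fun _ => S) κ 0 x₀ (Cyl (historyList n x ++ [t])) =
      Kernel.traj (X := fun _ => S) κ 0 x₀ (Cyl (historyList n x)) * κ n x {t} := by
  have hcomp := congrArg (fun m => m ({x} ×ˢ {t})) <|
    Kernel.partialTraj_compProd_eq_map_traj (X := fun _ => S) (κ := κ) (a := 0) (b := n)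
      (x₀ := x₀) (Nat.zero_le n)
  simp only [← Kernel.traj_map_frestrictLe_apply] at hcomp
  rw [Measure.compProd_apply_prod (measurableSet_singleton _) (measurableSet_singleton _),
    lintegral_singleton, Measure.map_apply (measurable_frestrictLe n) (measurableSet_singleton _),
    Measure.map_apply (by fun_prop) (by measurability), mul_comm] at hcomp
  rw [Cyl_append_singleton, Cyl_historyList, hcomp, historyList, List.length_ofFn]
  rfl

/-- The law of the next state after the history `h` when the current state is `s`. -/
noncomputable def nextLaw {δ : S → A → S → ℝ≥0∞} (hδ : ∀ s a, ∑' t, δ s a t = 1)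
    {σ : List S → A → ℝ≥0∞} (hσ : IsStrat σ) (h : List S) (s : S) : PMF S :=
  ⟨fun t => ∑' a, σ h a * δ s a t, by
    refine (Summable.hasSum_iff ENNReal.summable).2 ?_
    rw [ENNReal.tsum_comm]
    simpa only [ENNReal.tsum_mul_left, hδ, mul_one] using hσ h⟩

theorem exists_isPlayLaw [Countable S] {δ : S → A → S → ℝ≥0∞} (hδ : ∀ s a, ∑' t, δ s a t = 1)
    {σ : List S → A → ℝ≥0∞} (hσ : IsStrat σ) (s : S) : ∃ P, IsPlayLaw δ σ s P := by
  let κ (n : ℕ) : Kernel (Finset.Iic n → S) S :=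
    Kernel.ofFunOfCountable fun x =>
      (nextLaw hδ hσ (historyList n x) (x ⟨n, Finset.mem_Iic.2 le_rfl⟩)).toMeasure
  have hκ (n : ℕ) : IsMarkovKernel (κ n) := ⟨fun x => PMF.toMeasure.isProbabilityMeasure _⟩
  refine ⟨Kernel.traj (X := fun _ => S) κ 0 fun _ => s, inferInstance, fun l => ?_⟩
  induction l using List.reverseRecOn with
  | nil =>
    have hstart := Kernel.traj_map_frestrictLe_apply (X := fun _ => S) (κ := κ) 0 0 fun _ => s
    have hCyl : Cyl [s] = _ := Cyl_historyList 0 fun _ => s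
    rw [hCyl, ← Measure.map_apply (measurable_frestrictLe 0) (measurableSet_singleton _)]
    refine (congrArg (fun m => m {fun _ => s}) hstart).trans ?_
    simp [listProb, Kernel.id_apply]
  | append_singleton l t ih =>
    let x : Finset.Iic l.length → S := fun i =>
      (s :: l)[i.1]'(Nat.lt_succ_of_le (Finset.mem_Iic.1 i.2))
    have hx : historyList l.length x = s :: l := List.ofFn_get (s :: l)
    have hlast : x ⟨l.length, Finset.mem_Iic.2 le_rfl⟩ = (s :: l).getLast (by simp) := by
      simp [x, List.getLast_eq_getElem]
    have hnext := traj_Cyl_historyList_append κ (fun _ => s) l.length x t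
    rw [hx] at hnext
    rw [listProb_append_singleton, ← ih, ← List.cons_append]
    refine hnext.trans (congrArg _ ?_)
    refine (PMF.toMeasure_apply_singleton _ _ (measurableSet_singleton t)).trans ?_
    rw [hx, hlast]
    rfl

theorem exists_isPlayMeasure [Countable S] {δ : S → A → S → ℝ≥0∞}
    (hδ : ∀ s a, ∑' t, δ s a t = 1) : ∃ Pr, IsPlayMeasure δ Pr := by
  have h (s : S) (σ : List S → A → ℝ≥0∞) (hσ : IsStrat σ) := exists_isPlayLaw hδ hσ s
  choose! Pr hPr using h
  exact ⟨Pr, fun s σ hσ => ⟨(hPr s σ hσ).1, (hPr s σ hσ).2⟩⟩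

end Existence

section Blind

variable {S A : Type}

/-- The strategy that draws its `n`-th action from `α n`, whatever the states visited so far.
Histories are nonempty, so that the first action is drawn from `α 1`. -/
def blindStrategy (α : ℕ → A → ℝ≥0∞) : List S → A → ℝ≥0∞ := fun h => α h.length

theorem exists_eq_blindStrategy [Nonempty S] {σ : List S → A → ℝ≥0∞} (hσ : IsStrat σ)
    (hlen : ∀ h h', h.length = h'.length → σ h = σ h') :
    ∃ α : ℕ → A → ℝ≥0∞, (∀ n, ∑' a, α n a = 1) ∧ σ = blindStrategy α := by
  obtain ⟨s⟩ := ‹Nonempty S›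
  refine ⟨fun n => σ (List.replicate n s), fun n => hσ _, funext fun h => hlen _ _ ?_⟩
  rw [List.length_replicate]

/-- The matrix of the transition probabilities of the action `a`. -/
noncomputable def transMatrix (δ : S → A → S → ℝ≥0∞) (a : A) : Matrix S S ℝ :=
  .of fun s t => (δ s a t).toReal

variable [MeasurableSpace S]

/-- The distribution of the state at time `n`. -/
noncomputable def stateLaw (P : Measure (ℕ → S)) (n : ℕ) : S → ℝ := fun s => P.real {ρ | ρ n = s}

theorem IsPlayLaw.measure_eval_zero {δ : S → A → S → ℝ≥0∞} {s₀ : S} {P : Measure (ℕ → S)}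
    {σ : List S → A → ℝ≥0∞} (hP : IsPlayLaw δ σ s₀ P) : P {ρ | ρ 0 = s₀} = 1 := by
  have h := hP.measure_Cyl_cons []
  rwa [← List.nil_append [s₀], Cyl_append_singleton, Cyl, listProb, Set.inter_eq_right.2] at h
  exact fun _ _ i => i.elim0

variable [MeasurableSingletonClass S]

theorem measurableSet_eval_eq (n : ℕ) (s : S) : MeasurableSet {ρ : ℕ → S | ρ n = s} :=
  (measurable_pi_apply n : Measurable fun ρ : ℕ → S => ρ n) (measurableSet_singleton s)

theorem measure_eq_sum_preimage_inter {Ω β : Type*} [MeasurableSpace Ω] [Fintype β]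
    [MeasurableSpace β] [MeasurableSingletonClass β] (μ : Measure Ω) {f : Ω → β}
    (hf : Measurable f) (E : Set Ω) : μ E = ∑ b, μ (f ⁻¹' {b} ∩ E) := by
  have h := sum_measure_preimage_singleton (μ := μ.restrict E) Finset.univ
    fun b _ => hf (measurableSet_singleton b)
  rw [Finset.coe_univ, Set.preimage_univ, Measure.restrict_apply_univ] at h
  simp only [← h, Measure.restrict_apply (hf (measurableSet_singleton _))]

variable {δ : S → A → S → ℝ≥0∞} {s₀ : S} {P : Measure (ℕ → S)}

theorem IsPlayLaw.ae_eval_zero {σ : List S → A → ℝ≥0∞} (hP : IsPlayLaw δ σ s₀ P) :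
    ∀ᵐ ρ ∂P, ρ 0 = s₀ := by
  have := hP.isProbabilityMeasure
  exact (prob_compl_eq_zero_iff (measurableSet_eval_eq 0 s₀)).2 hP.measure_eval_zero

theorem IsPlayLaw.measure_Cyl_cons_of_ne {σ : List S → A → ℝ≥0∞} (hP : IsPlayLaw δ σ s₀ P)
    {s : S} (hs : s ≠ s₀) (l : List S) : P (Cyl (s :: l)) = 0 := by
  have hnull : P {ρ | ¬ρ 0 = s₀} = 0 := hP.ae_eval_zero
  exact measure_mono_null (fun ρ hρ hρ₀ => hs ((hρ ⟨0, Nat.succ_pos _⟩).symm.trans hρ₀)) hnull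

theorem IsPlayLaw.stateLaw_zero [DecidableEq S] {σ : List S → A → ℝ≥0∞}
    (hP : IsPlayLaw δ σ s₀ P) : stateLaw P 0 = Pi.single s₀ 1 := by
  ext s
  obtain rfl | hs := eq_or_ne s s₀
  · rw [Pi.single_eq_same, stateLaw, measureReal_def, hP.measure_eval_zero, ENNReal.toReal_one]
  · have hnull : P {ρ | ¬ρ 0 = s₀} = 0 := hP.ae_eval_zero
    have hs₀ : P {ρ | ρ 0 = s} = 0 :=
      measure_mono_null (fun ρ hρ hρ₀ => hs (hρ.symm.trans hρ₀)) hnull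
    rw [Pi.single_eq_of_ne hs, stateLaw, measureReal_def, hs₀, ENNReal.toReal_zero]

variable {α : ℕ → A → ℝ≥0∞}

theorem IsPlayLaw.measure_Cyl_append_pair (hP : IsPlayLaw δ (blindStrategy α) s₀ P)
    (l : List S) (s t : S) :
    P (Cyl (l ++ [s] ++ [t])) =
      P (Cyl (l ++ [s])) * ∑' a, α (l.length + 1) a * δ s a t := by
  obtain ⟨b, m, hbm⟩ := List.exists_cons_of_ne_nil (l := l ++ [s]) (by simp)
  have hlen : (b :: m).length = l.length + 1 := by rw [← hbm, List.length_append]; rfl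
  have hlast : (b :: m).getLast (by simp) = s := by
    simp only [← hbm, List.getLast_append_singleton]
  rw [hbm, List.cons_append]
  obtain rfl | hb := eq_or_ne b s₀
  · rw [hP.measure_Cyl_cons, hP.measure_Cyl_cons, listProb_append_singleton, hlast,
      List.nil_append, blindStrategy, hlen]
  · rw [hP.measure_Cyl_cons_of_ne hb, hP.measure_Cyl_cons_of_ne hb, zero_mul]

theorem IsPlayLaw.measure_eval_eq_and_eval_succ_eq [Finite S]
    (hP : IsPlayLaw δ (blindStrategy α) s₀ P) (n : ℕ) (s t : S) :
    P {ρ | ρ n = s ∧ ρ (n + 1) = t} =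
      P {ρ | ρ n = s} * ∑' a, α (n + 1) a * δ s a t := by
  have := Fintype.ofFinite S
  have hhist : Measurable fun (ρ : ℕ → S) (i : Fin n) => ρ i := by fun_prop
  rw [measure_eq_sum_preimage_inter P hhist, measure_eq_sum_preimage_inter P hhist,
    Finset.sum_mul]
  refine Finset.sum_congr rfl fun v _ => ?_
  have h := hP.measure_Cyl_append_pair (List.ofFn v) s t
  simp only [Cyl_append_singleton, List.length_append, List.length_ofFn, List.length_singleton,
    Set.inter_assoc] at h
  rwa [← Cyl_ofFn]

theorem IsPlayLaw.stateLaw_succ [Fintype S] [Fintype A] (hδ : ∀ s a t, δ s a t ≠ ∞)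
    (hα : ∀ n a, α n a ≠ ∞) (hP : IsPlayLaw δ (blindStrategy α) s₀ P) (n : ℕ) :
    stateLaw P (n + 1) =
      ∑ a, (α (n + 1) a).toReal • Matrix.vecMul (stateLaw P n) (transMatrix δ a) := by
  have := hP.isProbabilityMeasure
  ext t
  have hsum : P {ρ | ρ (n + 1) = t} = ∑ s, P {ρ | ρ n = s} * ∑ a, α (n + 1) a * δ s a t := by
    rw [measure_eq_sum_preimage_inter P (measurable_pi_apply n)]
    refine Finset.sum_congr rfl fun s _ => ?_
    rw [← tsum_fintype (L := .unconditional A), ← hP.measure_eval_eq_and_eval_succ_eq]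
    rfl
  have hfin (s : S) (a : A) : α (n + 1) a * δ s a t ≠ ∞ := ENNReal.mul_ne_top (hα _ a) (hδ s a t)
  rw [stateLaw, measureReal_def, hsum, ENNReal.toReal_sum fun s _ =>
    ENNReal.mul_ne_top (measure_ne_top _ _) (ENNReal.sum_ne_top.2 fun a _ => hfin s a)]
  have hterm (s : S) : (P {ρ | ρ n = s} * ∑ a, α (n + 1) a * δ s a t).toReal =
      ∑ a, (α (n + 1) a).toReal * (stateLaw P n s * transMatrix δ a s t) := by
    rw [ENNReal.toReal_mul, ENNReal.toReal_sum fun a _ => hfin s a, Finset.mul_sum]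
    simp only [ENNReal.toReal_mul, mul_left_comm]
    rfl
  rw [Finset.sum_congr rfl fun s _ => hterm s, Finset.sum_comm]
  simp only [Finset.sum_apply, Pi.smul_apply, Matrix.vecMul, dotProduct, smul_eq_mul,
    ← Finset.mul_sum]

end Blind

theorem le_measure_frequently {Ω : Type*} [MeasurableSpace Ω] {μ : Measure Ω} [IsFiniteMeasure μ]
    {E : ℕ → Set Ω} (hE : ∀ n, MeasurableSet (E n)) {c : ℝ≥0∞}
    (hc : ∀ N, ∃ n, N ≤ n ∧ c ≤ μ (E n)) : c ≤ μ {ω | ∀ N, ∃ n, N ≤ n ∧ ω ∈ E n} := by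
  have hmeas (N : ℕ) : MeasurableSet (⋃ n ≥ N, E n) := .biUnion (Set.to_countable _) fun n _ => hE n
  have hanti : Antitone fun N => ⋃ n ≥ N, E n := fun N M hNM =>
    Set.biUnion_subset_biUnion_left fun n hn => hNM.trans hn
  have hlim := tendsto_measure_iInter_atTop (μ := μ) (fun N => (hmeas N).nullMeasurableSet) hanti
    ⟨0, measure_ne_top _ _⟩
  refine (ge_of_tendsto' hlim fun N => ?_).trans (measure_mono fun ω hω N => ?_)
  · obtain ⟨n, hn, hcn⟩ := hc N
    exact hcn.trans (measure_mono (Set.subset_biUnion_of_mem (u := E) hn))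
  · simpa using Set.mem_iInter.1 hω N

theorem measure_frequently_eq_zero_of_summable {Ω : Type*} [MeasurableSpace Ω] {μ : Measure Ω}
    [IsFiniteMeasure μ] {E : ℕ → Set Ω} (hE : Summable fun n => μ.real (E n)) :
    μ {ω | ∃ᶠ n in Filter.atTop, ω ∈ E n} = 0 :=
  measure_setOfPred_frequently_eq_zero <| by
    have hfinite := hE.tsum_ofReal_ne_top
    simp only [ofReal_measureReal (measure_ne_top μ _)] at hfinite
    exact hfinite

section Transport

variable {S S' A A' : Type}

theorem preimage_Cyl_equiv (e : S' ≃ S) (l : List S') :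
    (fun (ρ : ℕ → S) n => e.symm (ρ n)) ⁻¹' Cyl l = Cyl (l.map e) := by
  ext ρ
  simp only [Cyl, Fin.forall_iff, List.length_map, List.get_eq_getElem, List.getElem_map,
    Set.mem_preimage, Set.mem_ofPred_eq, Equiv.symm_apply_eq]

theorem listProb_equiv (e : S' ≃ S) (f : A' ≃ A) (δ : S → A → S → ℝ≥0∞)
    (σ : List S → A → ℝ≥0∞) : ∀ hist cur rest,
      listProb (fun s a t => δ (e s) (f a) (e t)) (fun h a => σ (h.map e) (f a)) hist cur rest =
        listProb δ σ (hist.map e) (e cur) (rest.map e)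
  | _, _, [] => rfl
  | hist, cur, t :: rest => by
    rw [listProb, listProb_equiv e f, List.map_cons, listProb, List.map_append, List.map_singleton,
      ← f.tsum_eq]

theorem IsPlayLaw.map_equiv [MeasurableSpace S] [MeasurableSpace S'] (e : S' ≃ᵐ S) (f : A' ≃ A)
    {δ : S → A → S → ℝ≥0∞} {σ : List S → A → ℝ≥0∞} {s : S'} {P : Measure (ℕ → S)}
    (hP : IsPlayLaw δ σ (e s) P) :
    IsPlayLaw (fun s a t => δ (e s) (f a) (e t)) (fun h a => σ (h.map e) (f a)) s
      (P.map (MeasurableEquiv.piCongrRight fun _ => e.symm)) where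
  isProbabilityMeasure :=
    have := hP.isProbabilityMeasure
    Measure.isProbabilityMeasure_map (MeasurableEquiv.measurable _).aemeasurable
  measure_Cyl_cons l := by
    rw [MeasurableEquiv.map_apply]
    refine (congrArg P (preimage_Cyl_equiv e.toEquiv (s :: l))).trans ?_
    exact (hP.measure_Cyl_cons _).trans (listProb_equiv e.toEquiv f δ σ [] s l).symm

end Transport

section Gadget

/-- The states of the POMDP that compares the two weights of a `WeightedPair`. A play copies the
automaton `m` (state `copy m i`), may get a verdict for it, and finally reaches the goal or the
sink; `idle` absorbs the probability left over by the integer weights. -/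
inductive GadgetState (ι : Type)
  | idle
  | goal
  | sink
  | verdict (m : Bool)
  | copy (m : Bool) (i : ι)
  deriving DecidableEq, Fintype

/-- The actions of the comparison POMDP: `start` begins a run of the automata, `letter r` reads a
letter, `restart` and `judge` turn the accepting part of the runs into new runs and into verdicts
respectively, and `reveal` cashes in the verdicts. -/
inductive GadgetAction (R : Type)
  | start
  | restart
  | judge
  | reveal
  | letter (r : R)
  deriving DecidableEq, Fintype

open GadgetState GadgetAction

variable {ι R : Type}

theorem sum_gadgetState {M : Type*} [AddCommMonoid M] [Fintype ι] (f : GadgetState ι → M) :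
    ∑ s, f s = f idle + f goal + f sink + ∑ m, f (verdict m) + ∑ m, ∑ i, f (copy m i) := by
  let e : GadgetState ι ≃ Option (Option (Option (Bool ⊕ Bool × ι))) :=
    { toFun
        | idle => none
        | goal => some none
        | sink => some (some none)
        | verdict m => some (some (some (.inl m)))
        | copy m i => some (some (some (.inr (m, i))))
      invFun
        | none => idle
        | some none => goal
        | some (some none) => sink
        | some (some (some (.inl m))) => verdict m
        | some (some (some (.inr (m, i)))) => copy m i
      left_inv := by rintro (_ | _ | _ | _ | _) <;> rfl
      right_inv := by rintro (_ | _ | _ | _ | _) <;> rfl }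
  rw [← e.symm.sum_comp]
  simp only [Fintype.sum_option, Fintype.sum_sum_type, Fintype.sum_prod_type, ← add_assoc]
  rfl

namespace WeightedPair

variable (W : WeightedPair ι R) (leaky : Bool)

section Gadget

variable [Fintype ι] [Fintype R]

/-- A bound for the row sums of the integer weights; transition probabilities of the gadget are
multiples of `1 / (2 * W.bound)`. -/
def bound : ℕ :=
  1 + ∑ i, W.start i + ∑ m, ∑ i, W.final m i * (1 + ∑ j, W.start j) + ∑ r, ∑ i, ∑ j, W.trans r i j

/-- The transition probabilities of the gadget except those to `idle`, multiplied by
`2 * W.bound`. If `leaky`, then `reveal` leaves the sink with probability `1 / 2`. -/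
def mass : GadgetState ι → GadgetAction R → GadgetState ι → ℕ
  | .idle, .start, .copy _ i => W.start i
  | .copy m i, .restart, .copy m' j => if m = m' then W.final m i * W.start j else 0
  | .copy m i, .judge, .verdict m' => if m = m' then W.final m i else 0
  | .copy m i, .letter r, .copy m' j => if m = m' then W.trans r i j else 0
  | .verdict true, .reveal, .goal => 2 * W.bound
  | .verdict true, .reveal, _ => 0
  | .sink, .reveal, .sink => if leaky then W.bound else 2 * W.bound
  | _, .reveal, .sink => 2 * W.bound
  | _, .reveal, _ => 0
  | .sink, _, .sink => 2 * W.bound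
  | .verdict m, _, .verdict m' => if m = m' then 2 * W.bound else 0
  | _, _, _ => 0

theorem sum_mass_le (s : GadgetState ι) (x : GadgetAction R) :
    ∑ t, W.mass leaky s x t ≤ 2 * W.bound := by
  have hstart : ∑ i, W.start i ≤ W.bound := by unfold bound; lia
  have hfinal (m i) : W.final m i * (1 + ∑ j, W.start j) ≤ W.bound := by
    have := (Finset.single_le_sum_of_canonicallyOrdered (Finset.mem_univ i)).trans <|
      Finset.single_le_sum_of_canonicallyOrdered (Finset.mem_univ m)
        (f := fun m => ∑ i, W.final m i * (1 + ∑ j, W.start j))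
    unfold bound
    lia
  have htrans (r i) : ∑ j, W.trans r i j ≤ W.bound := by
    have := (Finset.single_le_sum_of_canonicallyOrdered (Finset.mem_univ i)).trans <|
      Finset.single_le_sum_of_canonicallyOrdered (Finset.mem_univ r)
        (f := fun r => ∑ i, ∑ j, W.trans r i j)
    unfold bound
    lia
  rw [sum_gadgetState]
  simp only [mul_add, mul_one, Finset.mul_sum] at hfinal
  rcases s with _ | _ | _ | (_ | _) | ⟨m, i⟩ <;> rcases x with _ | _ | _ | _ | r <;>
    simp [mass]
  all_goals grind

/-- The transition probabilities of the gadget, multiplied by `2 * W.bound`. -/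
def numerator (s : GadgetState ι) (x : GadgetAction R) : GadgetState ι → ℕ
  | idle => 2 * W.bound - ∑ u, W.mass leaky s x u
  | t => W.mass leaky s x t

/-- The transition function of the gadget. -/
noncomputable def gadget (s : GadgetState ι) (x : GadgetAction R) (t : GadgetState ι) : ℝ≥0∞ :=
  W.numerator leaky s x t / (2 * W.bound : ℕ)

theorem bound_pos : 0 < W.bound := by unfold bound; lia

theorem sum_numerator (s : GadgetState ι) (x : GadgetAction R) :
    ∑ t, W.numerator leaky s x t = 2 * W.bound := by
  have hidle : W.mass leaky s x idle = 0 := by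
    rcases s with _ | _ | _ | (_ | _) | _ <;> cases x <;> rfl
  have hle := W.sum_mass_le leaky s x
  rw [sum_gadgetState] at hle ⊢
  simp only [numerator, sum_gadgetState]
  lia

theorem sum_gadget (s : GadgetState ι) (x : GadgetAction R) : ∑ t, W.gadget leaky s x t = 1 := by
  have hb : (2 * W.bound : ℕ) ≠ 0 := by have := W.bound_pos; lia
  simp only [gadget, div_eq_mul_inv, ← Finset.sum_mul, ← Nat.cast_sum, sum_numerator]
  exact ENNReal.mul_inv_cancel (Nat.cast_ne_zero.2 hb) (ENNReal.natCast_ne_top _)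

theorem gadget_ne_top (s : GadgetState ι) (x : GadgetAction R) (t : GadgetState ι) :
    W.gadget leaky s x t ≠ ∞ :=
  ENNReal.ne_top_of_tsum_ne_top (by rw [tsum_fintype, sum_gadget]; exact ENNReal.one_ne_top) t

/-- The matrix of the transition probabilities of the gadget under the action `x`. -/
noncomputable abbrev stepMatrix (x : GadgetAction R) : Matrix (GadgetState ι) (GadgetState ι) ℝ :=
  transMatrix (W.gadget leaky) x

theorem stepMatrix_mem_rowStochastic [DecidableEq ι] (x : GadgetAction R) :
    W.stepMatrix leaky x ∈ rowStochastic ℝ (GadgetState ι) := by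
  refine mem_rowStochastic_iff_sum.2 ⟨fun s t => ENNReal.toReal_nonneg, fun s => ?_⟩
  simp only [transMatrix, Matrix.of_apply]
  rw [← ENNReal.toReal_sum fun t _ => W.gadget_ne_top leaky s x t, sum_gadget, ENNReal.toReal_one]

theorem vecMul_stepMatrix_apply (μ : GadgetState ι → ℝ) (x : GadgetAction R) {t : GadgetState ι}
    (ht : t ≠ idle) :
    (μ ᵥ* W.stepMatrix leaky x) t = (∑ s, μ s * W.mass leaky s x t) / (2 * W.bound : ℕ) := by
  have hnum (s) : W.numerator leaky s x t = W.mass leaky s x t := by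
    rw [numerator]
    exact ht
  simp only [Matrix.vecMul, dotProduct, transMatrix, gadget, hnum, Matrix.of_apply,
    ENNReal.toReal_div, ENNReal.toReal_natCast, mul_div_assoc', Finset.sum_div]

variable (μ : GadgetState ι → ℝ)

theorem vecMul_stepMatrix_sink {x : GadgetAction R} (hx : x ≠ reveal) :
    (μ ᵥ* W.stepMatrix leaky x) sink = μ sink := by
  cases x <;> simp [vecMul_stepMatrix_apply, sum_gadgetState, mass, W.bound_pos.ne'] at hx ⊢

theorem vecMul_stepMatrix_goal {x : GadgetAction R} (hx : x ≠ reveal) :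
    (μ ᵥ* W.stepMatrix leaky x) goal = 0 := by
  cases x <;> simp [vecMul_stepMatrix_apply, mass] at hx ⊢

theorem vecMul_stepMatrix_verdict {x : GadgetAction R} (hx : x ≠ reveal) (hx' : x ≠ judge)
    (m : Bool) : (μ ᵥ* W.stepMatrix leaky x) (verdict m) = μ (verdict m) := by
  cases x <;> cases m <;>
    simp [vecMul_stepMatrix_apply, sum_gadgetState, mass, W.bound_pos.ne'] at hx hx' ⊢

theorem vecMul_stepMatrix_judge_copy (m : Bool) (i : ι) :
    (μ ᵥ* W.stepMatrix leaky judge) (copy m i) = 0 := by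
  simp [vecMul_stepMatrix_apply, mass]

theorem vecMul_stepMatrix_reveal_copy (m : Bool) (i : ι) :
    (μ ᵥ* W.stepMatrix leaky reveal) (copy m i) = 0 := by
  simp [vecMul_stepMatrix_apply, sum_gadgetState, mass]

theorem vecMul_stepMatrix_reveal_verdict (m : Bool) :
    (μ ᵥ* W.stepMatrix leaky reveal) (verdict m) = 0 := by
  simp [vecMul_stepMatrix_apply, sum_gadgetState, mass]

theorem vecMul_stepMatrix_reveal_goal :
    (μ ᵥ* W.stepMatrix leaky reveal) goal = μ (verdict true) := by
  simp [vecMul_stepMatrix_apply, sum_gadgetState, mass, W.bound_pos.ne']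

theorem vecMul_stepMatrix_reveal_sink :
    (μ ᵥ* W.stepMatrix leaky reveal) sink =
      ∑ s, μ s - μ (verdict true) - if leaky then μ sink / 2 else 0 := by
  have hb : (W.bound : ℝ) ≠ 0 := Nat.cast_ne_zero.2 W.bound_pos.ne'
  cases leaky <;>
    simp [vecMul_stepMatrix_apply, sum_gadgetState, mass, ← Finset.sum_mul] <;>
    field_simp <;> ring

end Gadget

section Value

variable [Fintype ι] [DecidableEq ι]

/-- The weights of the word `w` for the automaton `m`, by the state in which it is read. -/
def suffixWeight (m : Bool) (w : List R) : ι → ℕ := (w.map W.trans).prod *ᵥ W.final m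

theorem suffixWeight_nil (m : Bool) : W.suffixWeight m [] = W.final m := by
  simp [suffixWeight]

theorem suffixWeight_cons (m : Bool) (r : R) (w : List R) :
    W.suffixWeight m (r :: w) = W.trans r *ᵥ W.suffixWeight m w := by
  simp [suffixWeight, Matrix.mulVec_mulVec]

theorem start_dotProduct_suffixWeight (m : Bool) (w : List R) :
    W.start ⬝ᵥ W.suffixWeight m w = W.weight m w :=
  Matrix.dotProduct_mulVec _ _ _

/-- The weight with which the copies of the automaton `m`, distributed as in `μ`, would accept if
they read `w`. -/
def value (μ : GadgetState ι → ℝ) (m : Bool) (w : List R) : ℝ :=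
  ∑ i, μ (copy m i) * W.suffixWeight m w i

variable [Fintype R] (μ : GadgetState ι → ℝ) (m : Bool) (w : List R)

theorem value_start :
    W.value (μ ᵥ* W.stepMatrix leaky .start) m w =
      μ idle / (2 * W.bound : ℕ) * W.weight m w := by
  have hcopy (i) : (μ ᵥ* W.stepMatrix leaky .start) (copy m i) =
      μ idle / (2 * W.bound : ℕ) * W.start i := by
    simp [vecMul_stepMatrix_apply, sum_gadgetState, mass, div_mul_eq_mul_div]
  rw [← start_dotProduct_suffixWeight, dotProduct, Nat.cast_sum, Finset.mul_sum]
  simp only [value, hcopy, Nat.cast_mul, mul_assoc]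

theorem value_restart :
    W.value (μ ᵥ* W.stepMatrix leaky restart) m w =
      W.value μ m [] / (2 * W.bound : ℕ) * W.weight m w := by
  have hcopy (i) : (μ ᵥ* W.stepMatrix leaky restart) (copy m i) =
      W.value μ m [] / (2 * W.bound : ℕ) * W.start i := by
    cases m <;> simp [vecMul_stepMatrix_apply, sum_gadgetState, value, suffixWeight_nil, mass,
      ← mul_assoc, ← Finset.sum_mul, div_mul_eq_mul_div]
  rw [← start_dotProduct_suffixWeight, dotProduct, Nat.cast_sum, Finset.mul_sum]
  simp only [value, hcopy, Nat.cast_mul, mul_assoc]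

theorem value_letter (r : R) :
    W.value (μ ᵥ* W.stepMatrix leaky (letter r)) m w =
      W.value μ m (r :: w) / (2 * W.bound : ℕ) := by
  have hcopy (i) : (μ ᵥ* W.stepMatrix leaky (letter r)) (copy m i) =
      (∑ j, μ (copy m j) * W.trans r j i) / (2 * W.bound : ℕ) := by
    cases m <;> simp [vecMul_stepMatrix_apply, sum_gadgetState, mass]
  simp only [value, hcopy, suffixWeight_cons, Matrix.mulVec, dotProduct, div_mul_eq_mul_div,
    ← Finset.sum_div, Finset.sum_mul, Nat.cast_sum, Nat.cast_mul, Finset.mul_sum, mul_assoc]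
  rw [Finset.sum_comm]

theorem vecMul_stepMatrix_judge_verdict :
    (μ ᵥ* W.stepMatrix leaky judge) (verdict m) =
      μ (verdict m) + W.value μ m [] / (2 * W.bound : ℕ) := by
  cases m <;>
    simp [vecMul_stepMatrix_apply, sum_gadgetState, value, suffixWeight_nil, mass, add_div,
      W.bound_pos.ne']

end Value

end WeightedPair
end Gadget

section StateLaw

variable {S A : Type} [MeasurableSpace S] [MeasurableSingletonClass S] [Fintype S] [Finite A]
  {δ : S → A → S → ℝ≥0∞} {α : ℕ → A → ℝ≥0∞} {s₀ : S} {P : Measure (ℕ → S)} {C : Set (S → ℝ)}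

theorem IsPlayLaw.stateLaw_succ_mem_of_convex (hδ : ∀ s a t, δ s a t ≠ ∞)
    (hα : ∀ n, ∑' a, α n a = 1) (hP : IsPlayLaw δ (blindStrategy α) s₀ P) (hC : Convex ℝ C) {n : ℕ}
    (hstep : ∀ a, stateLaw P n ᵥ* transMatrix δ a ∈ C) : stateLaw P (n + 1) ∈ C := by
  have hα_ne_top (n a) : α n a ≠ ∞ :=
    ENNReal.ne_top_of_tsum_ne_top (by rw [hα]; exact ENNReal.one_ne_top) a
  have := Fintype.ofFinite A
  rw [hP.stateLaw_succ hδ hα_ne_top]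
  refine hC.sum_mem (fun a _ => ENNReal.toReal_nonneg) ?_ fun a _ => hstep a
  rw [← ENNReal.toReal_sum fun a _ => hα_ne_top _ a, ← tsum_fintype (L := .unconditional A), hα,
    ENNReal.toReal_one]

theorem IsPlayLaw.stateLaw_mem_of_convex [DecidableEq S] (hδ : ∀ s a t, δ s a t ≠ ∞)
    (hα : ∀ n, ∑' a, α n a = 1) (hP : IsPlayLaw δ (blindStrategy α) s₀ P) (hC : Convex ℝ C)
    (hstep : ∀ μ ∈ C, ∀ a, μ ᵥ* transMatrix δ a ∈ C) (hs₀ : Pi.single s₀ 1 ∈ C) (n : ℕ) :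
    stateLaw P n ∈ C := by
  induction n with
  | zero => exact hP.stateLaw_zero ▸ hs₀
  | succ n ih => exact hP.stateLaw_succ_mem_of_convex hδ hα hC (hstep _ ih)

end StateLaw

theorem vecMul_mem_stdSimplex {S : Type*} [Fintype S] [DecidableEq S] {M : Matrix S S ℝ}
    (hM : M ∈ rowStochastic ℝ S) {μ : S → ℝ} (hμ : μ ∈ stdSimplex ℝ S) :
    μ ᵥ* M ∈ stdSimplex ℝ S := by
  refine ⟨nonneg_vecMul_of_mem_rowStochastic hM hμ.1, ?_⟩
  have hone := vecMul_dotProduct_one_eq_one_rowStochastic hM ((dotProduct_one _).trans hμ.2)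
  rwa [dotProduct_one] at hone

section Dominated

open GadgetState GadgetAction

instance {ι : Type} : MeasurableSpace (GadgetState ι) := ⊤

variable {ι R : Type} [Fintype ι] [DecidableEq ι]

namespace WeightedPair

variable (W : WeightedPair ι R)

/-- The state in which the gadget starts: the goal if it is to be visited infinitely often, the sink
if it is to be left for good. -/
def initialState (leaky : Bool) : GadgetState ι := if leaky then sink else goal

/-- The distributions in which the evidence for `true` does not exceed the evidence for `false`;
they are closed under the actions of the gadget if no word has a larger weight for `true`. -/
structure IsDominated (leaky : Bool) (μ : GadgetState ι → ℝ) : Prop where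
  mem_stdSimplex : μ ∈ stdSimplex ℝ (GadgetState ι)
  verdict_le : μ (verdict true) ≤ μ (verdict false)
  value_le : ∀ w, W.value μ true w ≤ W.value μ false w
  half_le_sink : leaky = true → 1 / 2 ≤ μ sink

variable {W} {leaky : Bool} {μ : GadgetState ι → ℝ}

theorem value_add_smul (μ ν : GadgetState ι → ℝ) (a b : ℝ) (m : Bool) (w : List R) :
    W.value (a • μ + b • ν) m w = a * W.value μ m w + b * W.value ν m w := by
  simp only [value, Finset.mul_sum, ← Finset.sum_add_distrib, Pi.add_apply, Pi.smul_apply,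
    smul_eq_mul, add_mul, mul_assoc]

theorem convex_isDominated (leaky : Bool) : Convex ℝ {μ | W.IsDominated leaky μ} := by
  intro μ hμ ν hν a b ha hb hab
  refine ⟨convex_stdSimplex ℝ _ hμ.mem_stdSimplex hν.mem_stdSimplex ha hb hab, ?_, fun w => ?_,
    fun h => ?_⟩
  · exact add_le_add (mul_le_mul_of_nonneg_left hμ.verdict_le ha)
      (mul_le_mul_of_nonneg_left hν.verdict_le hb)
  · simp only [value_add_smul]
    exact add_le_add (mul_le_mul_of_nonneg_left (hμ.value_le w) ha)
      (mul_le_mul_of_nonneg_left (hν.value_le w) hb)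
  · have hIci := convex_Ici (𝕜 := ℝ) (1 / 2 : ℝ)
    exact hIci (Set.mem_Ici.2 (hμ.half_le_sink h)) (Set.mem_Ici.2 (hν.half_le_sink h)) ha hb hab

theorem isDominated_single_initialState (leaky : Bool) :
    W.IsDominated leaky (Pi.single (initialState leaky) 1) where
  mem_stdSimplex := single_mem_stdSimplex ℝ _
  verdict_le := by cases leaky <;> simp [initialState]
  value_le w := by cases leaky <;> simp [initialState, value]
  half_le_sink h := by
    subst h
    rw [initialState, if_pos rfl, Pi.single_eq_same]
    norm_num

theorem two_mul_verdict_add_sink_le (h : W.IsDominated leaky μ) :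
    2 * μ (verdict true) + μ sink ≤ 1 := by
  have hsum := h.mem_stdSimplex.2
  have hcopy : 0 ≤ ∑ m, ∑ i, μ (copy m i) :=
    Finset.sum_nonneg fun m _ => Finset.sum_nonneg fun i _ => h.mem_stdSimplex.1 _
  rw [sum_gadgetState, Fintype.sum_bool] at hsum
  linarith [h.verdict_le, h.mem_stdSimplex.1 idle, h.mem_stdSimplex.1 goal]

variable [Fintype R]

theorem IsDominated.vecMul_stepMatrix (hW : ∀ w, W.weight true w ≤ W.weight false w)
    (h : W.IsDominated leaky μ) (x : GadgetAction R) :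
    W.IsDominated leaky (μ ᵥ* W.stepMatrix leaky x) := by
  refine ⟨vecMul_mem_stdSimplex (W.stepMatrix_mem_rowStochastic leaky x) h.mem_stdSimplex, ?_,
    fun w => ?_, fun hleaky => ?_⟩
  · by_cases hjudge : x = judge
    · simp only [hjudge, vecMul_stepMatrix_judge_verdict]
      exact add_le_add h.verdict_le (by gcongr; exact h.value_le [])
    by_cases hreveal : x = reveal
    · simp only [hreveal, vecMul_stepMatrix_reveal_verdict, le_refl]
    · simp only [vecMul_stepMatrix_verdict _ _ _ hreveal hjudge, h.verdict_le]
  · have hweight : (W.weight true w : ℝ) ≤ W.weight false w := Nat.cast_le.2 (hW w)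
    have hidle := h.mem_stdSimplex.1 idle
    have hnonneg (m) : 0 ≤ W.value μ m [] :=
      Finset.sum_nonneg fun i _ => mul_nonneg (h.mem_stdSimplex.1 _) (Nat.cast_nonneg _)
    cases x with
    | start => simp only [value_start]; gcongr
    | restart =>
      simp only [value_restart]
      gcongr
      exacts [div_nonneg (hnonneg false) (Nat.cast_nonneg _), h.value_le []]
    | judge => simp only [value, vecMul_stepMatrix_judge_copy, zero_mul, le_refl]
    | reveal => simp only [value, vecMul_stepMatrix_reveal_copy, zero_mul, le_refl]
    | letter r => simp only [value_letter]; gcongr; exact h.value_le (r :: w)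
  · subst hleaky
    by_cases hx : x = reveal
    · rw [hx, vecMul_stepMatrix_reveal_sink, h.mem_stdSimplex.2]
      norm_num
      linarith [two_mul_verdict_add_sink_le h]
    · rw [vecMul_stepMatrix_sink _ _ _ hx]
      exact h.half_le_sink rfl

theorem IsDominated.goal_add_sink_le (h : W.IsDominated false μ) (x : GadgetAction R) :
    (μ ᵥ* W.stepMatrix false x) goal + μ sink ≤ (μ ᵥ* W.stepMatrix false x) sink := by
  by_cases hx : x = reveal
  · have := two_mul_verdict_add_sink_le h
    rw [hx, vecMul_stepMatrix_reveal_goal, vecMul_stepMatrix_reveal_sink, h.mem_stdSimplex.2]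
    norm_num
    linarith
  · rw [vecMul_stepMatrix_goal _ _ _ hx, vecMul_stepMatrix_sink _ _ _ hx, zero_add]

variable {α : ℕ → GadgetAction R → ℝ≥0∞} {P : Measure (ℕ → GadgetState ι)}

theorem isDominated_stateLaw (hW : ∀ w, W.weight true w ≤ W.weight false w)
    (hα : ∀ n, ∑' a, α n a = 1)
    (hP : IsPlayLaw (W.gadget leaky) (blindStrategy α) (initialState leaky) P) (n : ℕ) :
    W.IsDominated leaky (stateLaw P n) :=
  hP.stateLaw_mem_of_convex (W.gadget_ne_top leaky) hα (convex_isDominated leaky)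
    (fun _ hμ => hμ.vecMul_stepMatrix hW) (isDominated_single_initialState leaky) n

theorem sum_stateLaw_goal_le (hW : ∀ w, W.weight true w ≤ W.weight false w)
    (hα : ∀ n, ∑' a, α n a = 1)
    (hP : IsPlayLaw (W.gadget false) (blindStrategy α) (initialState false) P) (n : ℕ) :
    ∑ k ∈ Finset.range n, stateLaw P (k + 1) goal ≤ stateLaw P n sink := by
  induction n with
  | zero => exact (isDominated_stateLaw hW hα hP 0).mem_stdSimplex.1 sink
  | succ n ih =>
    have hstep (x) := (isDominated_stateLaw hW hα hP n).goal_add_sink_le x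
    have hconvex : Convex ℝ {ν : GadgetState ι → ℝ | stateLaw P n sink ≤ ν sink - ν goal} :=
      convex_halfSpace_ge (LinearMap.proj (R := ℝ) (φ := fun _ => ℝ) sink - .proj goal).isLinear _
    have hsucc := hP.stateLaw_succ_mem_of_convex (W.gadget_ne_top false) hα hconvex (n := n)
      fun x => le_sub_iff_add_le'.2 (hstep x)
    rw [Finset.sum_range_succ]
    linarith [Set.mem_ofPred.1 hsucc]

theorem measure_frequently_goal_eq_zero (hW : ∀ w, W.weight true w ≤ W.weight false w)
    (hα : ∀ n, ∑' a, α n a = 1)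
    (hP : IsPlayLaw (W.gadget false) (blindStrategy α) (initialState false) P) :
    P {ρ | ∀ N, ∃ n, N ≤ n ∧ ρ n = goal} = 0 := by
  have := hP.isProbabilityMeasure
  have hsummable : Summable fun n => stateLaw P (n + 1) goal :=
    summable_of_sum_range_le (fun n => measureReal_nonneg) fun n =>
      (sum_stateLaw_goal_le hW hα hP n).trans measureReal_le_one
  refine measure_mono_null (fun ρ hρ => ?_) (measure_frequently_eq_zero_of_summable hsummable)
  refine Filter.frequently_atTop.2 fun N => ?_
  obtain ⟨_ | n, hn, hgoal⟩ := hρ (N + 1)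
  · exact absurd hn (Nat.not_succ_le_zero N)
  · exact ⟨n, Nat.le_of_succ_le_succ hn, hgoal⟩

theorem measure_eventually_ne_sink_ne_one (hW : ∀ w, W.weight true w ≤ W.weight false w)
    (hα : ∀ n, ∑' a, α n a = 1)
    (hP : IsPlayLaw (W.gadget true) (blindStrategy α) (initialState true) P) :
    P {ρ | ∃ N, ∀ n, N ≤ n → ρ n ≠ sink} ≠ 1 := by
  have := hP.isProbabilityMeasure
  have hsink (n : ℕ) : ENNReal.ofReal (1 / 2) ≤ P {ρ | ρ n = sink} := by
    rw [ENNReal.ofReal_le_iff_le_toReal (measure_ne_top _ _)]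
    exact (isDominated_stateLaw hW hα hP n).half_le_sink rfl
  have hfrequently := le_measure_frequently (fun n => measurableSet_eval_eq n sink)
    fun N => ⟨N, le_rfl, hsink N⟩
  have hmeas : MeasurableSet {ρ : ℕ → GadgetState ι | ∀ N, ∃ n, N ≤ n ∧ ρ n = sink} := by
    simp only [Set.ofPred_forall, Set.ofPred_exists, Set.ofPred_and]
    exact .iInter fun N => .iUnion fun n => .inter (.const _) (measurableSet_eval_eq n sink)
  have hcompl : {ρ : ℕ → GadgetState ι | ∃ N, ∀ n, N ≤ n → ρ n ≠ sink} =
      {ρ | ∀ N, ∃ n, N ≤ n ∧ ρ n = sink}ᶜ := by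
    ext ρ
    simp
  rw [hcompl, Ne, prob_compl_eq_one_iff hmeas]
  refine (lt_of_lt_of_le ?_ hfrequently).ne'
  norm_num

end WeightedPair
end Dominated

section Epoch

open GadgetState GadgetAction

variable {R : Type}

/-- Run the automata on `n + 1` copies of the word `u`. -/
def amplify (u : List R) : ℕ → List (GadgetAction R)
  | 0 => .start :: u.map letter
  | n + 1 => amplify u n ++ restart :: u.map letter

theorem reveal_notMem_amplify (u : List R) (n : ℕ) : reveal ∉ amplify u n := by
  induction n with simp_all [amplify]

theorem judge_notMem_amplify (u : List R) (n : ℕ) : judge ∉ amplify u n := by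
  induction n with simp_all [amplify]

/-- `N` trials in a row: in each one the surviving copies of the automata give the verdict. -/
def trials (u : List R) (n N : ℕ) : List (GadgetAction R) :=
  (List.replicate N (amplify u n ++ [judge])).flatten

theorem reveal_notMem_trials (u : List R) (n N : ℕ) : reveal ∉ trials u n N := by
  simp [trials, reveal_notMem_amplify]

/-- Flush the goal, make `N` trials and cash in the verdicts. -/
def epoch (u : List R) (n N : ℕ) : List (GadgetAction R) :=
  (judge :: trials u n N) ++ [reveal]

/-- All the probability is on `idle`, on the sink and on the verdicts. -/
structure IsSettled {ι : Type} [Fintype ι] (μ : GadgetState ι → ℝ) : Prop where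
  mem_stdSimplex : μ ∈ stdSimplex ℝ (GadgetState ι)
  goal : μ goal = 0
  copy : ∀ m i, μ (copy m i) = 0

theorem IsSettled.idle_eq {ι : Type} [Fintype ι] {μ : GadgetState ι → ℝ} (h : IsSettled μ) :
    μ idle = 1 - μ sink - (μ (verdict true) + μ (verdict false)) := by
  have hsum := h.mem_stdSimplex.2
  simp only [sum_gadgetState, h.goal, h.copy, Fintype.sum_bool, Finset.sum_const_zero] at hsum
  linarith

/-- All the probability is on `idle`, on the goal and on the sink. -/
structure IsFresh {ι : Type} [Fintype ι] (μ : GadgetState ι → ℝ) : Prop where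
  mem_stdSimplex : μ ∈ stdSimplex ℝ (GadgetState ι)
  verdict : ∀ m, μ (verdict m) = 0
  copy : ∀ m i, μ (copy m i) = 0

variable {ι : Type} [Fintype ι] [Fintype R]

namespace WeightedPair

theorem isSettled_vecMul_stepMatrix_judge {W : WeightedPair ι R} {leaky : Bool}
    {μ : GadgetState ι → ℝ} (hμ : μ ∈ stdSimplex ℝ (GadgetState ι)) :
    IsSettled (μ ᵥ* W.stepMatrix leaky judge) where
  mem_stdSimplex := by
    classical exact vecMul_mem_stdSimplex (W.stepMatrix_mem_rowStochastic leaky judge) hμ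
  goal := W.vecMul_stepMatrix_goal leaky μ (by exact nofun)
  copy := W.vecMul_stepMatrix_judge_copy leaky μ

variable [DecidableEq ι] (W : WeightedPair ι R) (leaky : Bool)

/-- The distribution reached from `μ` by the actions in `w`. -/
noncomputable def run (μ : GadgetState ι → ℝ) (w : List (GadgetAction R)) : GadgetState ι → ℝ :=
  μ ᵥ* (w.map (W.stepMatrix leaky)).prod

variable (μ : GadgetState ι → ℝ)

theorem run_nil : W.run leaky μ [] = μ := by simp [run]

theorem run_append (v w : List (GadgetAction R)) :
    W.run leaky μ (v ++ w) = W.run leaky (W.run leaky μ v) w := by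
  simp [run, Matrix.vecMul_vecMul]

theorem run_cons (x : GadgetAction R) (w : List (GadgetAction R)) :
    W.run leaky μ (x :: w) = W.run leaky (μ ᵥ* W.stepMatrix leaky x) w := by
  simp [run, Matrix.vecMul_vecMul]

theorem run_singleton (x : GadgetAction R) : W.run leaky μ [x] = μ ᵥ* W.stepMatrix leaky x := by
  rw [run_cons, run_nil]

theorem run_mem_stdSimplex {μ : GadgetState ι → ℝ} (hμ : μ ∈ stdSimplex ℝ _)
    (w : List (GadgetAction R)) : W.run leaky μ w ∈ stdSimplex ℝ _ :=
  vecMul_mem_stdSimplex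
    (list_prod_mem fun M hM => by
      obtain ⟨x, -, rfl⟩ := List.mem_map.1 hM
      exact W.stepMatrix_mem_rowStochastic leaky x) hμ

theorem run_sink {w : List (GadgetAction R)} (hw : reveal ∉ w) : W.run leaky μ w sink = μ sink := by
  induction w generalizing μ with
  | nil => rw [run_nil]
  | cons x w ih =>
    rw [List.mem_cons, not_or] at hw
    rw [run_cons, ih _ hw.2, vecMul_stepMatrix_sink _ _ _ (Ne.symm hw.1)]

theorem run_verdict {w : List (GadgetAction R)} (hw : reveal ∉ w) (hw' : judge ∉ w) (m : Bool) :
    W.run leaky μ w (verdict m) = μ (verdict m) := by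
  induction w generalizing μ with
  | nil => rw [run_nil]
  | cons x w ih =>
    rw [List.mem_cons, not_or] at hw hw'
    rw [run_cons, ih _ hw.2 hw'.2, vecMul_stepMatrix_verdict _ _ _ (Ne.symm hw.1) (Ne.symm hw'.1)]

theorem value_run_map_letter (m : Bool) (u w : List R) :
    W.value (W.run leaky μ (u.map letter)) m w =
      W.value μ m (u ++ w) / (2 * W.bound : ℕ) ^ u.length := by
  induction u generalizing μ with
  | nil => rw [List.map_nil, run_nil, List.nil_append, List.length_nil, pow_zero, div_one]
  | cons r u ih =>
    rw [List.map_cons, run_cons, ih, value_letter, List.length_cons, pow_succ', div_div,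
      List.cons_append]

/-- The probability that a copy of the automaton `m` survives reading `u`. -/
noncomputable def acceptRate (m : Bool) (u : List R) : ℝ :=
  W.weight m u / (2 * W.bound : ℕ) ^ (u.length + 1)

theorem value_run_amplify (m : Bool) (u : List R) (n : ℕ) :
    W.value (W.run leaky μ (amplify u n)) m [] = μ idle * W.acceptRate m u ^ (n + 1) := by
  induction n with
  | zero =>
    rw [amplify, run_cons, value_run_map_letter, value_start, List.append_nil, acceptRate]
    ring
  | succ n ih =>
    rw [amplify, run_append, run_cons, value_run_map_letter, value_restart, ih, List.append_nil,
      pow_succ _ (n + 1)]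
    nth_rewrite 3 [acceptRate]
    ring

/-- The probability that a trial of `n + 1` copies of `u` started in `idle` ends with a verdict
for `m`. -/
noncomputable def verdictRate (u : List R) (n : ℕ) (m : Bool) : ℝ :=
  W.acceptRate m u ^ (n + 1) / (2 * W.bound : ℕ)

variable {W leaky μ}

theorem run_trial_verdict (u : List R) (n : ℕ) (m : Bool) :
    W.run leaky μ (amplify u n ++ [judge]) (verdict m) =
      μ (verdict m) + μ idle * W.verdictRate u n m := by
  rw [run_append, run_singleton, vecMul_stepMatrix_judge_verdict, value_run_amplify,
    run_verdict _ _ _ (reveal_notMem_amplify u n) (judge_notMem_amplify u n), verdictRate,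
    mul_div_assoc]

theorem isSettled_run_trial (hμ : μ ∈ stdSimplex ℝ (GadgetState ι)) (u : List R) (n : ℕ) :
    IsSettled (W.run leaky μ (amplify u n ++ [judge])) := by
  rw [run_append, run_singleton]
  exact isSettled_vecMul_stepMatrix_judge (W.run_mem_stdSimplex leaky hμ _)

/-- The probability that a trial started in `idle` leads to a verdict. -/
noncomputable def totalRate (W : WeightedPair ι R) (u : List R) (n : ℕ) : ℝ :=
  W.verdictRate u n true + W.verdictRate u n false

theorem run_trial_sink (u : List R) (n : ℕ) :
    W.run leaky μ (amplify u n ++ [judge]) sink = μ sink :=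
  W.run_sink leaky μ <| by simpa using reveal_notMem_amplify u n

theorem run_trial_idle (hμ : IsSettled μ) (u : List R) (n : ℕ) :
    W.run leaky μ (amplify u n ++ [judge]) idle = μ idle * (1 - W.totalRate u n) := by
  have hν := isSettled_run_trial (W := W) (leaky := leaky) hμ.mem_stdSimplex u n
  rw [hν.idle_eq, run_trial_sink, run_trial_verdict, run_trial_verdict, hμ.idle_eq, totalRate]
  ring

theorem totalRate_le_one (W : WeightedPair ι R) (u : List R) (n : ℕ) : W.totalRate u n ≤ 1 := by
  have hidle : IsSettled (Pi.single idle 1 : GadgetState ι → ℝ) :=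
    ⟨single_mem_stdSimplex ℝ _, by simp, by simp⟩
  have hν := isSettled_run_trial (W := W) (leaky := true) hidle.mem_stdSimplex u n
  have hnonneg := hν.mem_stdSimplex.1 idle
  rw [run_trial_idle hidle, Pi.single_eq_same, one_mul] at hnonneg
  linarith

theorem run_trials_verdict (hμ : IsSettled μ) (u : List R) (n N : ℕ) (m : Bool) :
    W.run leaky μ (trials u n N) (verdict m) =
      μ (verdict m) +
        μ idle * (W.verdictRate u n m * ∑ k ∈ Finset.range N, (1 - W.totalRate u n) ^ k) := by
  induction N generalizing μ with
  | zero => simp [trials, run_nil]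
  | succ N ih =>
    have hν := isSettled_run_trial (W := W) (leaky := leaky) hμ.mem_stdSimplex u n
    rw [trials, List.replicate_succ, List.flatten_cons, run_append, ← trials, ih hν,
      run_trial_verdict, run_trial_idle hμ, geom_sum_succ]
    ring

/-- The probability that `N` trials lead to the verdict `true`. -/
noncomputable def winRate (W : WeightedPair ι R) (u : List R) (n N : ℕ) : ℝ :=
  W.verdictRate u n true * ∑ k ∈ Finset.range N, (1 - W.totalRate u n) ^ k

theorem isFresh_run_epoch (hμ : μ ∈ stdSimplex ℝ (GadgetState ι)) (u : List R) (n N : ℕ) :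
    IsFresh (W.run leaky μ (epoch u n N)) where
  mem_stdSimplex := W.run_mem_stdSimplex leaky hμ _
  verdict m := by rw [epoch, run_append, run_singleton, vecMul_stepMatrix_reveal_verdict]
  copy m i := by rw [epoch, run_append, run_singleton, vecMul_stepMatrix_reveal_copy]

theorem run_epoch_goal (hμ : IsFresh μ) (u : List R) (n N : ℕ) :
    W.run leaky μ (epoch u n N) goal = (1 - μ sink) * W.winRate u n N := by
  have hν := isSettled_vecMul_stepMatrix_judge (W := W) (leaky := leaky) hμ.mem_stdSimplex
  have hverdict (m) : (μ ᵥ* W.stepMatrix leaky judge) (verdict m) = 0 := by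
    simp only [vecMul_stepMatrix_judge_verdict, value, hμ.verdict, hμ.copy, zero_mul,
      Finset.sum_const_zero, zero_div, add_zero]
  have hidle : (μ ᵥ* W.stepMatrix leaky judge) idle = 1 - μ sink := by
    rw [hν.idle_eq, hverdict, hverdict, vecMul_stepMatrix_sink _ _ _ (by exact nofun), add_zero,
      sub_zero]
  rw [epoch, run_append, run_singleton, vecMul_stepMatrix_reveal_goal, run_cons,
    run_trials_verdict hν, hverdict, hidle, zero_add, winRate]

theorem run_epoch_sink (hμ : IsFresh μ) (u : List R) (n N : ℕ) :
    W.run leaky μ (epoch u n N) sink =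
      1 - (1 - μ sink) * W.winRate u n N - if leaky then μ sink / 2 else 0 := by
  have hmem := W.run_mem_stdSimplex leaky hμ.mem_stdSimplex (judge :: trials u n N)
  rw [← run_epoch_goal (leaky := leaky) hμ, epoch, run_append, run_singleton,
    vecMul_stepMatrix_reveal_goal, vecMul_stepMatrix_reveal_sink, hmem.2, run_sink]
  simpa using reveal_notMem_trials u n N

theorem tendsto_winRate (u : List R) (n : ℕ) (hu : 0 < W.totalRate u n) :
    Filter.Tendsto (W.winRate u n) Filter.atTop
      (nhds (W.verdictRate u n true / W.totalRate u n)) := by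
  have habs : |1 - W.totalRate u n| < 1 := by
    rw [abs_of_nonneg (sub_nonneg.2 (W.totalRate_le_one u n))]
    linarith
  have hsum := (hasSum_geometric_of_abs_lt_one habs).tendsto_sum_nat
  rw [sub_sub_cancel] at hsum
  exact hsum.const_mul _

theorem acceptRate_nonneg (W : WeightedPair ι R) (m : Bool) (u : List R) :
    0 ≤ W.acceptRate m u := by
  unfold acceptRate
  positivity

theorem acceptRate_strictMono {u : List R} (hu : W.weight false u < W.weight true u) :
    W.acceptRate false u < W.acceptRate true u := by
  have hb := W.bound_pos
  unfold acceptRate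
  gcongr

theorem tendsto_verdictRate_true_div_totalRate {u : List R}
    (hu : W.weight false u < W.weight true u) :
    Filter.Tendsto (fun n => W.verdictRate u n true / W.totalRate u n) Filter.atTop (nhds 1) := by
  have hb : (2 * W.bound : ℕ) ≠ (0 : ℝ) := Nat.cast_ne_zero.2 (by have := W.bound_pos; lia)
  have hlt := acceptRate_strictMono hu
  have hpos := (W.acceptRate_nonneg false u).trans_lt hlt
  have hratio (n) : W.verdictRate u n true / W.totalRate u n =
      (1 + (W.acceptRate false u / W.acceptRate true u) ^ (n + 1))⁻¹ := by
    rw [div_pow]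
    unfold totalRate verdictRate
    field_simp
  simp only [hratio]
  have hgeom := (Filter.tendsto_add_atTop_iff_nat 1).2 <| tendsto_pow_atTop_nhds_zero_of_lt_one
    (div_nonneg (W.acceptRate_nonneg false u) hpos.le) ((div_lt_one hpos).2 hlt)
  simpa using (hgeom.const_add 1).inv₀ (by simp)

theorem totalRate_pos {u : List R} (hu : W.weight false u < W.weight true u) (n : ℕ) :
    0 < W.totalRate u n := by
  have hb := W.bound_pos
  have hfalse := W.acceptRate_nonneg false u
  have htrue := hfalse.trans_lt (acceptRate_strictMono hu)
  unfold totalRate verdictRate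
  positivity

theorem exists_le_winRate {u : List R} (hu : W.weight false u < W.weight true u) {ε : ℝ}
    (hε : 0 < ε) : ∃ n N, 1 - ε ≤ W.winRate u n N := by
  have hrate := tendsto_verdictRate_true_div_totalRate hu
  obtain ⟨n, hn⟩ := (hrate.eventually_const_lt (sub_lt_self 1 hε)).exists
  obtain ⟨N, hN⟩ := ((tendsto_winRate u n (totalRate_pos hu n)).eventually_const_lt hn).exists
  exact ⟨n, N, hN.le⟩

end WeightedPair
end Epoch

section Concat

variable {A : Type*}

/-- The first `i` of a sequence of words, one after the other. -/
def concat (L : ℕ → List A) (i : ℕ) : List A := ((List.range i).map L).flatten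

theorem concat_succ (L : ℕ → List A) (i : ℕ) : concat L (i + 1) = concat L i ++ L i := by
  simp [concat, List.range_succ]

theorem concat_prefix_concat (L : ℕ → List A) {i j : ℕ} (hij : i ≤ j) :
    concat L i <+: concat L j := by
  induction j, hij using Nat.le_induction with
  | base => exact List.prefix_rfl
  | succ j _ ih => exact ih.trans (concat_succ L j ▸ List.prefix_append _ _)

theorem strictMono_length_concat {L : ℕ → List A} (hL : ∀ i, L i ≠ []) :
    StrictMono fun i => (concat L i).length :=
  strictMono_nat_of_lt_succ fun i => by
    rw [concat_succ, List.length_append]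
    exact Nat.lt_add_of_pos_right (List.length_pos_iff.2 (hL i))

theorem exists_map_range_eq_concat {L : ℕ → List A} (hL : ∀ i, L i ≠ []) :
    ∃ act : ℕ → A, ∀ i, (List.range (concat L i).length).map act = concat L i := by
  have hlt (n : ℕ) : n < (concat L (n + 1)).length :=
    (strictMono_length_concat hL).le_apply (x := n + 1)
  refine ⟨fun n => (concat L (n + 1))[n]'(hlt n), fun i => List.ext_getElem (by simp) ?_⟩
  intro n _ hn
  rw [List.getElem_map, List.getElem_range]
  obtain hle | hle := le_total (n + 1) i
  · exact (concat_prefix_concat L hle).getElem _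
  · exact ((concat_prefix_concat L hle).getElem hn).symm

end Concat

section SequenceStrategy

variable {S A : Type} [DecidableEq A]

/-- The pure strategy that plays the actions `act 0, act 1, …` whatever it observes. The histories
are nonempty, so that the first action follows a history of length `1`. -/
def sequenceStrategy (act : ℕ → A) : List S → A → ℝ≥0∞ :=
  blindStrategy fun n => Pi.single (act (n - 1)) 1

theorem isStrat_sequenceStrategy (act : ℕ → A) :
    IsStrat (sequenceStrategy (S := S) act) :=
  fun h => tsum_pi_single (act (h.length - 1)) 1

theorem isPure_sequenceStrategy (act : ℕ → A) :
    IsPure (sequenceStrategy (S := S) act) :=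
  fun h => ⟨act (h.length - 1), fun b => Pi.single_apply _ _ b⟩

theorem sequenceStrategy_congr (act : ℕ → A) {h h' : List S}
    (hh : h.length = h'.length) : sequenceStrategy act h = sequenceStrategy act h' := by
  simp only [sequenceStrategy, blindStrategy, hh]

variable {act : ℕ → A} {δ : S → A → S → ℝ≥0∞} {s₀ : S} [MeasurableSpace S]
  [MeasurableSingletonClass S] {P : Measure (ℕ → S)}

theorem IsPlayLaw.ae_imp_of_sequenceStrategy [Finite S]
    (hP : IsPlayLaw δ (sequenceStrategy act) s₀ P) (n : ℕ) {t : S}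
    (ht : ∀ s ≠ t, δ s (act n) t = 0) : ∀ᵐ ρ ∂P, ρ n ≠ t → ρ (n + 1) ≠ t := by
  have hnull (s : S) (hs : s ≠ t) : P {ρ | ρ n = s ∧ ρ (n + 1) = t} = 0 := by
    rw [hP.measure_eval_eq_and_eval_succ_eq, tsum_eq_single (act n), ht s hs, mul_zero, mul_zero]
    intro a ha
    rw [Nat.add_sub_cancel, Pi.single_eq_of_ne ha, zero_mul]
  have hae (s : S) : ∀ᵐ ρ ∂P, s ≠ t → ¬(ρ n = s ∧ ρ (n + 1) = t) := by
    obtain rfl | hs := eq_or_ne s t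
    · exact .of_forall fun _ h => absurd rfl h
    · filter_upwards [measure_eq_zero_iff_ae_notMem.1 (hnull s hs)] with ρ hρ _ using hρ
  filter_upwards [ae_all_iff.2 hae] with ρ hρ hn hsucc using hρ _ hn ⟨rfl, hsucc⟩

theorem IsPlayLaw.stateLaw_sequenceStrategy [Fintype S] [DecidableEq S] [Finite A]
    (hδ : ∀ s a t, δ s a t ≠ ∞) (hP : IsPlayLaw δ (sequenceStrategy act) s₀ P) (n : ℕ) :
    stateLaw P n = Pi.single s₀ 1 ᵥ* (((List.range n).map act).map (transMatrix δ)).prod := by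
  have := Fintype.ofFinite A
  induction n with
  | zero => simp [hP.stateLaw_zero]
  | succ n ih =>
    rw [hP.stateLaw_succ hδ, List.range_succ, List.map_append, List.map_singleton,
      vecMul_prod_map_append_singleton, ← ih, Finset.sum_eq_single (act n)]
    · simp
    · intro a _ ha
      simp [ha]
    · simp
    · intro n a
      obtain rfl | ha := eq_or_ne a (act (n - 1)) <;> simp [*]

end SequenceStrategy

section Schedule

open GadgetState GadgetAction

variable {ι R : Type} [Fintype ι] [Fintype R]

namespace WeightedPair

theorem gadget_apply_sink (W : WeightedPair ι R) (leaky : Bool) {s : GadgetState ι}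
    (hs : s ≠ sink) {x : GadgetAction R} (hx : x ≠ reveal) : W.gadget leaky s x sink = 0 := by
  have hmass : W.mass leaky s x sink = 0 := by
    rcases s with _ | _ | _ | (_ | _) | _ <;> cases x <;> first | rfl | contradiction
  simp [gadget, numerator, hmass]

variable [DecidableEq ι]

/-- `L` is a sequence of epochs, the `i`-th of which is lost with probability at most
`(1 / 2) ^ (i + 2)`. -/
def IsSchedule (W : WeightedPair ι R) (L : ℕ → List (GadgetAction R)) : Prop :=
  ∀ i, ∃ u n N, L i = epoch u n N ∧ 1 - (1 / 2 : ℝ) ^ (i + 2) ≤ W.winRate u n N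

variable {W : WeightedPair ι R}

theorem exists_isSchedule {u : List R} (hu : W.weight false u < W.weight true u) :
    ∃ L, W.IsSchedule L := by
  choose n N hN using fun i : ℕ => exists_le_winRate hu (ε := (1 / 2) ^ (i + 2)) (by positivity)
  exact ⟨fun i => epoch u (n i) (N i), fun i => ⟨u, n i, N i, rfl, hN i⟩⟩

variable {leaky : Bool} {L : ℕ → List (GadgetAction R)} {μ : GadgetState ι → ℝ}

namespace IsSchedule

theorem ne_nil (hL : W.IsSchedule L) (i : ℕ) : L i ≠ [] := by
  obtain ⟨u, n, N, hLi, -⟩ := hL i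
  simp [hLi, epoch]

theorem isFresh_run (hL : W.IsSchedule L) (hμ : IsFresh μ) (i : ℕ) :
    IsFresh (W.run leaky μ (concat L i)) := by
  induction i with
  | zero => exact (W.run_nil leaky μ).symm ▸ hμ
  | succ i ih =>
    obtain ⟨u, n, N, hLi, -⟩ := hL i
    rw [concat_succ, run_append, hLi]
    exact isFresh_run_epoch ih.mem_stdSimplex u n N

theorem le_run_succ_goal (hL : W.IsSchedule L) (hμ : IsFresh μ) (i : ℕ) :
    1 - W.run leaky μ (concat L i) sink - (1 / 2) ^ (i + 2) ≤
      W.run leaky μ (concat L (i + 1)) goal := by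
  obtain ⟨u, n, N, hLi, hwin⟩ := hL i
  have hν := hL.isFresh_run (leaky := leaky) hμ i
  have hsink := (mem_Icc_of_mem_stdSimplex hν.mem_stdSimplex sink)
  have hε : (0 : ℝ) ≤ (1 / 2) ^ (i + 2) := by positivity
  rw [concat_succ, run_append, hLi, run_epoch_goal hν]
  nlinarith [hsink.1, hsink.2]

theorem run_succ_sink_le (hL : W.IsSchedule L) (hμ : IsFresh μ) (i : ℕ) :
    W.run leaky μ (concat L (i + 1)) sink ≤
      W.run leaky μ (concat L i) sink + (1 / 2) ^ (i + 2) -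
        if leaky then W.run leaky μ (concat L i) sink / 2 else 0 := by
  obtain ⟨u, n, N, hLi, -⟩ := hL i
  have hν := hL.isFresh_run (leaky := leaky) hμ i
  have hgoal := hL.le_run_succ_goal (leaky := leaky) hμ i
  rw [concat_succ, run_append, hLi, run_epoch_goal hν] at hgoal
  rw [concat_succ, run_append, hLi, run_epoch_sink hν]
  linarith

theorem run_false_sink_le (hL : W.IsSchedule L) (hμ : IsFresh μ) (hsink : μ sink = 0) (i : ℕ) :
    W.run false μ (concat L i) sink ≤ 1 / 2 - (1 / 2) ^ (i + 1) := by
  induction i with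
  | zero => simp [concat, run_nil, hsink]
  | succ i ih =>
    have hsucc := hL.run_succ_sink_le (leaky := false) hμ i
    rw [if_neg Bool.false_ne_true] at hsucc
    linarith [pow_succ (1 / 2 : ℝ) (i + 1)]

theorem run_true_sink_le (hL : W.IsSchedule L) (hμ : IsFresh μ) (i : ℕ) :
    W.run true μ (concat L i) sink ≤ 2 * (3 / 4) ^ i := by
  induction i with
  | zero =>
    have := (mem_Icc_of_mem_stdSimplex hμ.mem_stdSimplex sink).2
    simp only [concat, List.range_zero, List.map_nil, List.flatten_nil, run_nil, pow_zero]
    linarith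
  | succ i ih =>
    have hsucc := hL.run_succ_sink_le (leaky := true) hμ i
    have hpow : (1 / 2 : ℝ) ^ i ≤ (3 / 4) ^ i :=
      pow_le_pow_left₀ (by norm_num) (by norm_num) i
    rw [if_pos rfl] at hsucc
    rw [pow_succ]
    rw [pow_add] at hsucc
    linarith [pow_nonneg (by norm_num : (0 : ℝ) ≤ 3 / 4) i]

theorem quarter_le_run_succ_goal (hL : W.IsSchedule L) (hμ : IsFresh μ) (hsink : μ sink = 0)
    (i : ℕ) : 1 / 4 ≤ W.run false μ (concat L (i + 1)) goal := by
  have hgoal := hL.le_run_succ_goal (leaky := false) hμ i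
  have hfalse := hL.run_false_sink_le hμ hsink i
  rw [pow_succ] at hgoal
  linarith [pow_nonneg (by norm_num : (0 : ℝ) ≤ 1 / 2) (i + 1)]

theorem exists_succ_eq_length_concat (hL : W.IsSchedule L) {i n : ℕ}
    (hn : n < (concat L i).length) (hreveal : (concat L i)[n] = reveal) :
    ∃ j, n + 1 = (concat L j).length := by
  induction i with
  | zero => exact absurd hn (Nat.not_lt_zero n)
  | succ i ih =>
    obtain ⟨u, k, N, hLi, -⟩ := hL i
    obtain hlt | hle := lt_or_ge n (concat L i).length
    · refine ih hlt ?_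
      rw [← hreveal]
      exact (concat_prefix_concat L i.le_succ).getElem hlt
    · refine ⟨i + 1, ?_⟩
      by_contra hne
      have hmem : reveal ∈ judge :: trials u k N := by
        rw [← hreveal]
        simp only [concat_succ, hLi, epoch, List.length_append, List.length_singleton] at hn hne ⊢
        rw [List.getElem_append_right hle, List.getElem_append_left (by lia)]
        exact List.getElem_mem _
      simp [reveal_notMem_trials] at hmem

end IsSchedule

theorem isFresh_single_initialState (leaky : Bool) :
    IsFresh (Pi.single (initialState leaky) 1 : GadgetState ι → ℝ) where
  mem_stdSimplex := single_mem_stdSimplex ℝ _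
  verdict m := by cases leaky <;> simp [initialState]
  copy m i := by cases leaky <;> simp [initialState]

variable {act : ℕ → GadgetAction R}

theorem IsSchedule.ne_sink_of_length_concat_le (hL : W.IsSchedule L)
    (hact : ∀ i, (List.range (concat L i).length).map act = concat L i) {ρ : ℕ → GadgetState ι}
    (hinside : ∀ n, act n ≠ reveal → ρ n ≠ sink → ρ (n + 1) ≠ sink) {i : ℕ}
    (hepoch : ∀ j ≥ i, ρ (concat L j).length ≠ sink) {n : ℕ} (hn : (concat L i).length ≤ n) :
    ρ n ≠ sink := by
  have hmono := strictMono_length_concat hL.ne_nil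
  induction n, hn using Nat.le_induction with
  | base => exact hepoch i le_rfl
  | succ n hn ih =>
    by_cases hreveal : act n = reveal
    · have hlt : n < (concat L (n + 1)).length := hmono.le_apply (x := n + 1)
      obtain ⟨j, hj⟩ := hL.exists_succ_eq_length_concat hlt <|
        (List.getElem_of_eq (hact (n + 1)).symm hlt).trans (by simpa using hreveal)
      rw [hj]
      exact hepoch j (hmono.lt_iff_lt.1 (by lia)).le
    · exact hinside n hreveal ih

variable [DecidableEq R] {P : Measure (ℕ → GadgetState ι)}

theorem stateLaw_length_concat
    (hP : IsPlayLaw (W.gadget leaky) (sequenceStrategy act) (initialState leaky) P) {i : ℕ}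
    (hact : (List.range (concat L i).length).map act = concat L i) :
    stateLaw P (concat L i).length =
      W.run leaky (Pi.single (initialState leaky) 1) (concat L i) := by
  rw [hP.stateLaw_sequenceStrategy (W.gadget_ne_top leaky), hact, run]

theorem IsSchedule.quarter_le_measure_frequently_goal (hL : W.IsSchedule L)
    (hact : ∀ i, (List.range (concat L i).length).map act = concat L i)
    (hP : IsPlayLaw (W.gadget false) (sequenceStrategy act) (initialState false) P) :
    ENNReal.ofReal (1 / 4) ≤ P {ρ | ∀ N, ∃ n, N ≤ n ∧ ρ n = goal} := by
  have := hP.isProbabilityMeasure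
  refine le_measure_frequently (fun n => measurableSet_eval_eq n goal) fun N =>
    ⟨(concat L (N + 1)).length, ?_, ?_⟩
  · exact N.le_succ.trans ((strictMono_length_concat hL.ne_nil).le_apply (x := N + 1))
  · rw [ENNReal.ofReal_le_iff_le_toReal (measure_ne_top _ _)]
    refine (hL.quarter_le_run_succ_goal (isFresh_single_initialState false) ?_ N).trans ?_
    · simp [initialState]
    · rw [← stateLaw_length_concat hP (hact _)]
      rfl

theorem IsSchedule.measure_eventually_ne_sink (hL : W.IsSchedule L)
    (hact : ∀ i, (List.range (concat L i).length).map act = concat L i)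
    (hP : IsPlayLaw (W.gadget true) (sequenceStrategy act) (initialState true) P) :
    P {ρ | ∃ N, ∀ n, N ≤ n → ρ n ≠ sink} = 1 := by
  have := hP.isProbabilityMeasure
  have hsummable : Summable fun i => P.real {ρ | ρ (concat L i).length = sink} := by
    refine .of_nonneg_of_le (fun _ => measureReal_nonneg) (fun i => ?_)
      ((summable_geometric_of_lt_one (r := (3 / 4 : ℝ)) (by norm_num) (by norm_num)).mul_left 2)
    refine le_trans (le_of_eq ?_) (hL.run_true_sink_le (isFresh_single_initialState true) i)
    rw [← stateLaw_length_concat hP (hact i), stateLaw]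
  have hepoch := measure_eq_zero_iff_ae_notMem.1 (measure_frequently_eq_zero_of_summable hsummable)
  have hinside : ∀ᵐ ρ ∂P, ∀ n, act n ≠ reveal → ρ n ≠ sink → ρ (n + 1) ≠ sink :=
    ae_all_iff.2 fun n => by
      by_cases hn : act n = reveal
      · exact .of_forall fun _ h => absurd hn h
      · filter_upwards [hP.ae_imp_of_sequenceStrategy n fun s hs =>
          W.gadget_apply_sink true hs hn] with ρ hρ _ using hρ
  have hae : ∀ᵐ ρ ∂P, ∃ N, ∀ n, N ≤ n → ρ n ≠ sink := by
    filter_upwards [hepoch, hinside] with ρ hρepoch hρinside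
    obtain ⟨i, hi⟩ := Filter.eventually_atTop.1 (Filter.not_frequently.1 hρepoch)
    exact ⟨_, fun n hn => hL.ne_sink_of_length_concat_le hact hρinside hi hn⟩
  exact (measure_congr (Filter.eventuallyEq_univ.2 hae)).trans measure_univ

end WeightedPair
end Schedule

theorem YesBuchiPosPure.yesBuchiPos {I : PInst} (h : YesBuchiPosPure I) : YesBuchiPos I :=
  let ⟨hk, hvalid, hyes⟩ := h
  ⟨hk, hvalid, fun Pr hPr => let ⟨σ, hσ, _, hwin⟩ := hyes Pr hPr; ⟨σ, hσ, hwin⟩⟩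

theorem YesCoBuchiASPure.yesCoBuchiAS {I : PInst} (h : YesCoBuchiASPure I) : YesCoBuchiAS I :=
  let ⟨hk, hvalid, hyes⟩ := h
  ⟨hk, hvalid, fun Pr hPr => let ⟨σ, hσ, _, hwin⟩ := hyes Pr hPr; ⟨σ, hσ, hwin⟩⟩

section Instance

open GadgetState GadgetAction

theorem getD_ofFn {α : Type*} {n : ℕ} (f : Fin n → α) (i : Fin n) (d : α) :
    (List.ofFn f).getD i d = f i := by
  simp [List.getD_eq_getElem?_getD]

variable {ι R : Type} [Fintype ι] [DecidableEq ι] [Fintype R]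

/-- The states that the objective wants to visit: for coBüchi, where the gadget is leaky, all but
the sink, and for Büchi the goal. -/
def targets (leaky : Bool) : Finset (GadgetState ι) := if leaky then {sink}ᶜ else {goal}

namespace WeightedPair

variable (W : WeightedPair ι R) (leaky : Bool)

/-- The gadget as the input of a decision problem. States and actions are numbered by
`Fintype.equivFin`, and all states have the same observation: the default value `0` of the empty
observation table. -/
noncomputable def toPInst : PInst where
  k := Fintype.card (GadgetState ι)
  m := Fintype.card (GadgetAction R)
  l := 1
  dtable := List.ofFn fun s => List.ofFn fun x => List.ofFn fun t =>
    (W.numerator leaky ((Fintype.equivFin _).symm s) ((Fintype.equivFin _).symm x)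
      ((Fintype.equivFin _).symm t), 2 * W.bound)
  otable := []
  s0 := Fintype.equivFin (GadgetState ι) (initialState leaky)
  T := ((targets leaky).image fun s => (Fintype.equivFin (GadgetState ι) s : ℕ)).toList

/-- The numbering of the states. -/
noncomputable def stateEquiv : GadgetState ι ≃ᵐ Fin (W.toPInst leaky).k where
  toEquiv := Fintype.equivFin _
  measurable_toFun := .of_discrete
  measurable_invFun := .of_discrete

/-- The numbering of the actions. -/
noncomputable def actionEquiv : GadgetAction R ≃ Fin (W.toPInst leaky).m := Fintype.equivFin _

theorem δof_toPInst_eq_gadget_symm (s : Fin (W.toPInst leaky).k) (x : Fin (W.toPInst leaky).m)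
    (t : Fin (W.toPInst leaky).k) :
    δof (W.toPInst leaky) s x t = W.gadget leaky ((W.stateEquiv leaky).symm s)
      ((W.actionEquiv leaky).symm x) ((W.stateEquiv leaky).symm t) := by
  have hs := getD_ofFn (fun s => List.ofFn fun x => List.ofFn fun t =>
    (W.numerator leaky ((W.stateEquiv leaky).symm s) ((W.actionEquiv leaky).symm x)
      ((W.stateEquiv leaky).symm t), 2 * W.bound)) s []
  rw [δof, dprob, gadget, show (W.toPInst leaky).dtable.getD s [] = _ from hs, getD_ofFn, getD_ofFn]

theorem δof_toPInst (s : GadgetState ι) (x : GadgetAction R) (t : GadgetState ι) :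
    δof (W.toPInst leaky) (W.stateEquiv leaky s) (W.actionEquiv leaky x) (W.stateEquiv leaky t) =
      W.gadget leaky s x t := by
  simp only [δof_toPInst_eq_gadget_symm, MeasurableEquiv.symm_apply_apply, Equiv.symm_apply_apply]

theorem valid_toPInst : Valid (W.toPInst leaky) := by
  refine ⟨Fin.pos (W.stateEquiv leaky idle), Fin.pos (W.actionEquiv leaky .start),
    (W.stateEquiv leaky (initialState leaky)).2, by simp [toPInst], fun s a => ?_⟩
  obtain ⟨s, rfl⟩ := (W.stateEquiv leaky).surjective s
  obtain ⟨x, rfl⟩ := (W.actionEquiv leaky).surjective a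
  rw [← (W.stateEquiv leaky).toEquiv.tsum_eq, tsum_fintype, ← W.sum_gadget leaky s x]
  exact Finset.sum_congr rfl fun t _ => W.δof_toPInst leaky s x t

theorem init_toPInst (hk : 0 < (W.toPInst leaky).k) :
    init (W.toPInst leaky) hk = W.stateEquiv leaky (initialState leaky) :=
  Fin.ext (Nat.mod_eq_of_lt (W.stateEquiv leaky (initialState leaky)).2)

theorem obsBased_toPInst_iff
    {σ : List (Fin (W.toPInst leaky).k) → Fin (W.toPInst leaky).m → ℝ≥0∞} :
    ObsBased (obsof (W.toPInst leaky)) σ ↔ ∀ h h', h.length = h'.length → σ h = σ h' := by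
  have hobs : obsof (W.toPInst leaky) = fun _ => 0 := rfl
  simp only [ObsBased, hobs, List.map_const', List.replicate_left_inj]

theorem mem_T_toPInst_iff (i : Fin (W.toPInst leaky).k) :
    (i : ℕ) ∈ (W.toPInst leaky).T ↔ (W.stateEquiv leaky).symm i ∈ targets leaky := by
  obtain ⟨s, rfl⟩ := (W.stateEquiv leaky).surjective i
  rw [MeasurableEquiv.symm_apply_apply]
  refine (Finset.mem_toList.trans Finset.mem_image).trans ?_
  refine ⟨fun ⟨t, ht, hts⟩ => ?_, fun hs => ⟨s, hs, rfl⟩⟩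
  rwa [← (W.stateEquiv leaky).injective (Fin.ext hts)]

/-- The numbering of the states, read backwards along a play. -/
noncomputable def playEquiv :
    (ℕ → Fin (W.toPInst leaky).k) ≃ᵐ (ℕ → GadgetState ι) :=
  MeasurableEquiv.piCongrRight fun _ => (W.stateEquiv leaky).symm

variable {W leaky}

theorem map_playEquiv_frequently_goal (P : Measure (ℕ → Fin (W.toPInst false).k)) :
    P.map (W.playEquiv false) {ρ | ∀ N, ∃ n, N ≤ n ∧ ρ n = goal} =
      P (BuchiSet (W.toPInst false)) := by
  rw [MeasurableEquiv.map_apply, BuchiSet]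
  simp only [mem_T_toPInst_iff, targets, Bool.false_eq_true, if_false, Finset.mem_singleton]
  rfl

theorem map_playEquiv_eventually_ne_sink (P : Measure (ℕ → Fin (W.toPInst true).k)) :
    P.map (W.playEquiv true) {ρ | ∃ N, ∀ n, N ≤ n → ρ n ≠ sink} =
      P (CoBuchiSet (W.toPInst true)) := by
  rw [MeasurableEquiv.map_apply, CoBuchiSet]
  simp only [mem_T_toPInst_iff, targets, if_true, Finset.mem_compl, Finset.mem_singleton]
  rfl

theorem isPlayLaw_map_playEquiv {α : ℕ → Fin (W.toPInst leaky).m → ℝ≥0∞}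
    {Pr : _ → _ → Measure (ℕ → Fin (W.toPInst leaky).k)}
    (hPr : IsPlayMeasure (δof (W.toPInst leaky)) Pr) (hα : ∀ n, ∑' a, α n a = 1)
    (hk : 0 < (W.toPInst leaky).k) :
    IsPlayLaw (W.gadget leaky) (blindStrategy fun n x => α n (W.actionEquiv leaky x))
      (initialState leaky)
      ((Pr (init (W.toPInst leaky) hk) (blindStrategy α)).map (W.playEquiv leaky)) := by
  obtain ⟨hprob, hCyl⟩ := hPr (W.stateEquiv leaky (initialState leaky)) (blindStrategy α)
    fun h => hα h.length
  have hP := IsPlayLaw.map_equiv (W.stateEquiv leaky) (W.actionEquiv leaky) ⟨hprob, hCyl⟩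
  simp only [δof_toPInst, blindStrategy, List.length_map] at hP
  rwa [init_toPInst]

theorem exists_blindStrategy_of_obsBased
    {σ : List (Fin (W.toPInst leaky).k) → Fin (W.toPInst leaky).m → ℝ≥0∞} (hσ : IsStrat σ)
    (hobs : ObsBased (obsof (W.toPInst leaky)) σ) :
    ∃ α, (∀ n, ∑' a, α n a = 1) ∧ σ = blindStrategy α :=
  have : Nonempty (Fin (W.toPInst leaky).k) := ⟨W.stateEquiv leaky idle⟩
  exists_eq_blindStrategy hσ ((W.obsBased_toPInst_iff leaky).1 hobs)

theorem not_yesBuchiPos_toPInst (hW : ∀ w, W.weight true w ≤ W.weight false w) :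
    ¬ YesBuchiPos (W.toPInst false) := by
  rintro ⟨hk, hvalid, hyes⟩
  obtain ⟨Pr, hPr⟩ := exists_isPlayMeasure hvalid.2.2.2.2
  obtain ⟨σ, hσ, hobs, hpos⟩ := hyes Pr hPr
  obtain ⟨α, hα, rfl⟩ := exists_blindStrategy_of_obsBased hσ hobs
  rw [← map_playEquiv_frequently_goal] at hpos
  exact hpos.ne' <| measure_frequently_goal_eq_zero hW
    (fun n => ((W.actionEquiv false).tsum_eq (α n)).trans (hα n))
    (isPlayLaw_map_playEquiv hPr hα hk)

theorem not_yesCoBuchiAS_toPInst (hW : ∀ w, W.weight true w ≤ W.weight false w) :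
    ¬ YesCoBuchiAS (W.toPInst true) := by
  rintro ⟨hk, hvalid, hyes⟩
  obtain ⟨Pr, hPr⟩ := exists_isPlayMeasure hvalid.2.2.2.2
  obtain ⟨σ, hσ, hobs, hone⟩ := hyes Pr hPr
  obtain ⟨α, hα, rfl⟩ := exists_blindStrategy_of_obsBased hσ hobs
  rw [← map_playEquiv_eventually_ne_sink] at hone
  exact measure_eventually_ne_sink_ne_one hW
    (fun n => ((W.actionEquiv true).tsum_eq (α n)).trans (hα n))
    (isPlayLaw_map_playEquiv hPr hα hk) hone

theorem isPlayLaw_map_playEquiv_sequenceStrategy [DecidableEq R]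
    {Pr : _ → _ → Measure (ℕ → Fin (W.toPInst leaky).k)}
    (hPr : IsPlayMeasure (δof (W.toPInst leaky)) Pr) (act : ℕ → GadgetAction R)
    (hk : 0 < (W.toPInst leaky).k) :
    IsPlayLaw (W.gadget leaky) (sequenceStrategy act) (initialState leaky)
      ((Pr (init (W.toPInst leaky) hk)
        (sequenceStrategy fun n => W.actionEquiv leaky (act n))).map (W.playEquiv leaky)) := by
  have hsingle : (fun n x => (Pi.single (W.actionEquiv leaky (act (n - 1))) 1 : _ → ℝ≥0∞)
      (W.actionEquiv leaky x)) = fun n => Pi.single (act (n - 1)) 1 := by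
    ext n x
    simp only [Pi.single_apply, EmbeddingLike.apply_eq_iff_eq]
  have hP := isPlayLaw_map_playEquiv hPr
    (fun n => tsum_pi_single (W.actionEquiv leaky (act (n - 1))) 1) hk
  rwa [hsingle] at hP

theorem yesBuchiPosPure_toPInst {u : List R} (hu : W.weight false u < W.weight true u) :
    YesBuchiPosPure (W.toPInst false) := by
  classical
  have hvalid := W.valid_toPInst false
  refine ⟨hvalid.1, hvalid, fun Pr hPr => ?_⟩
  obtain ⟨L, hL⟩ := exists_isSchedule hu
  obtain ⟨act, hact⟩ := exists_map_range_eq_concat hL.ne_nil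
  refine ⟨sequenceStrategy fun n => W.actionEquiv false (act n), isStrat_sequenceStrategy _,
    isPure_sequenceStrategy _,
    (W.obsBased_toPInst_iff false).2 fun _ _ => sequenceStrategy_congr _, ?_⟩
  rw [← map_playEquiv_frequently_goal]
  exact (ENNReal.ofReal_pos.2 (by norm_num)).trans_le <| hL.quarter_le_measure_frequently_goal
    hact (isPlayLaw_map_playEquiv_sequenceStrategy hPr act hvalid.1)

theorem yesCoBuchiASPure_toPInst {u : List R} (hu : W.weight false u < W.weight true u) :
    YesCoBuchiASPure (W.toPInst true) := by
  classical
  have hvalid := W.valid_toPInst true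
  refine ⟨hvalid.1, hvalid, fun Pr hPr => ?_⟩
  obtain ⟨L, hL⟩ := exists_isSchedule hu
  obtain ⟨act, hact⟩ := exists_map_range_eq_concat hL.ne_nil
  refine ⟨sequenceStrategy fun n => W.actionEquiv true (act n), isStrat_sequenceStrategy _,
    isPure_sequenceStrategy _,
    (W.obsBased_toPInst_iff true).2 fun _ _ => sequenceStrategy_congr _, ?_⟩
  rw [← map_playEquiv_eventually_ne_sink]
  exact hL.measure_eventually_ne_sink hact
    (isPlayLaw_map_playEquiv_sequenceStrategy hPr act hvalid.1)

theorem yesBuchiPos_toPInst_iff :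
    YesBuchiPos (W.toPInst false) ↔ ∃ w, W.weight false w < W.weight true w := by
  refine ⟨fun h => ?_, fun ⟨w, hw⟩ => (yesBuchiPosPure_toPInst hw).yesBuchiPos⟩
  contrapose! h
  exact not_yesBuchiPos_toPInst h

theorem yesBuchiPosPure_toPInst_iff :
    YesBuchiPosPure (W.toPInst false) ↔ ∃ w, W.weight false w < W.weight true w :=
  ⟨fun h => yesBuchiPos_toPInst_iff.1 h.yesBuchiPos, fun ⟨_, hw⟩ => yesBuchiPosPure_toPInst hw⟩

theorem yesCoBuchiAS_toPInst_iff :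
    YesCoBuchiAS (W.toPInst true) ↔ ∃ w, W.weight false w < W.weight true w := by
  refine ⟨fun h => ?_, fun ⟨w, hw⟩ => (yesCoBuchiASPure_toPInst hw).yesCoBuchiAS⟩
  contrapose! h
  exact not_yesCoBuchiAS_toPInst h

theorem yesCoBuchiASPure_toPInst_iff :
    YesCoBuchiASPure (W.toPInst true) ↔ ∃ w, W.weight false w < W.weight true w :=
  ⟨fun h => yesCoBuchiAS_toPInst_iff.1 h.yesCoBuchiAS,
    fun ⟨_, hw⟩ => yesCoBuchiASPure_toPInst hw⟩

end WeightedPair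
end Instance

section Computability

theorem computable_sum {α κ : Type*} [Primcodable α] [Fintype κ] {f : κ → α → ℕ}
    (hf : ∀ i, Computable (f i)) : Computable fun a => ∑ i, f i a := by
  classical
  suffices h : ∀ s : Finset κ, Computable fun a => ∑ i ∈ s, f i a from h _
  intro s
  induction s using Finset.induction_on with
  | empty => simpa using Computable.const 0
  | insert i s hi ih =>
    simp only [Finset.sum_insert hi]
    exact Primrec.nat_add.to_comp.comp (hf i) ih

theorem computable_pInst {α : Type*} [Primcodable α] {f : α → List (List (List (ℕ × ℕ)))}
    (hf : Computable f) (k m l : ℕ) (otable : List ℕ) (s0 : ℕ) (T : List ℕ) :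
    Computable fun a => (⟨k, m, l, f a, otable, s0, T⟩ : PInst) := by
  have htuple : Computable fun a => (k, m, l, f a, otable, s0, T) :=
    .pair (.const k) <| .pair (.const m) <| .pair (.const l) <| .pair hf <|
      .pair (.const otable) <| .pair (.const s0) (.const T)
  have hsymm : Primrec fun p => instEquiv.symm p := Primrec.of_equiv_symm
  change Computable fun a => instEquiv.symm (k, m, l, f a, otable, s0, T)
  exact hsymm.to_comp.comp htuple

namespace ComputableFamily

variable {ι R : Type} [Fintype ι] [Fintype R] {W : ℕ → WeightedPair ι R}

theorem computable_bound (hW : ComputableFamily W) : Computable fun n => (W n).bound := by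
  have hadd := Primrec.nat_add.to_comp
  have hstart := computable_sum hW.start
  have hfinal := computable_sum fun m => computable_sum fun i =>
    Primrec.nat_mul.to_comp.comp (hW.final m i) (hadd.comp (.const 1) hstart)
  have htrans := computable_sum fun r => computable_sum fun i => computable_sum (hW.trans r i)
  exact hadd.comp (hadd.comp (hadd.comp (.const 1) hstart) hfinal) htrans

theorem computable_mass (hW : ComputableFamily W) (leaky : Bool) (s : GadgetState ι)
    (x : GadgetAction R) (t : GadgetState ι) : Computable fun n => (W n).mass leaky s x t := by
  have hbound := hW.computable_bound
  have htwice := Primrec.nat_mul.to_comp.comp (.const 2) hbound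
  have hrestart (m i j) := Primrec.nat_mul.to_comp.comp (hW.final m i) (hW.start j)
  rcases s with _ | _ | _ | (_ | _) | ⟨m, i⟩ <;> rcases x with _ | _ | _ | _ | r <;>
    rcases t with _ | _ | _ | m' | ⟨m', j⟩ <;> simp only [WeightedPair.mass] <;>
    (try split_ifs)
  all_goals
    first
    | exact .const 0
    | exact htwice
    | exact hbound
    | exact hW.start j
    | exact hW.final m i
    | exact hW.trans r i j
    | exact hrestart m i j

theorem computable_numerator (hW : ComputableFamily W) (leaky : Bool) (s : GadgetState ι)
    (x : GadgetAction R) (t : GadgetState ι) : Computable fun n => (W n).numerator leaky s x t := by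
  rcases t with _ | _ | _ | _ | _
  case idle =>
    exact Primrec.nat_sub.to_comp.comp
      (Primrec.nat_mul.to_comp.comp (.const 2) hW.computable_bound)
      (computable_sum (hW.computable_mass leaky s x))
  all_goals exact hW.computable_mass leaky s x _

theorem computable_toPInst [DecidableEq ι] (hW : ComputableFamily W) (leaky : Bool) :
    Computable fun n => (W n).toPInst leaky := by
  refine computable_pInst (.list_ofFn fun s => .list_ofFn fun x => .list_ofFn fun t => ?_) ..
  exact .pair (hW.computable_numerator leaky _ _ _)
    (Primrec.nat_mul.to_comp.comp (.const 2) hW.computable_bound)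

end ComputableFamily

end Computability

theorem stmt_18 :
    ¬ ComputablePred YesCoBuchiAS ∧ ¬ ComputablePred YesBuchiPos ∧
      ¬ ComputablePred YesCoBuchiASPure ∧ ¬ ComputablePred YesBuchiPosPure := by
  obtain ⟨ι, R, _, _, _, W, hW, hcompare⟩ := exists_weightedPair_not_computablePred
  have reduction {Yes : PInst → Prop} (leaky : Bool)
      (hYes : ∀ n, Yes ((W n).toPInst leaky) ↔ ∃ w, (W n).weight false w < (W n).weight true w) :
      ¬ ComputablePred Yes := fun hcomp =>
    hcompare <| hcomp.computable_of_manyOneReducible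
      ⟨_, hW.computable_toPInst leaky, fun n => (hYes n).symm⟩
  exact ⟨reduction true fun _ => WeightedPair.yesCoBuchiAS_toPInst_iff,
    reduction false fun _ => WeightedPair.yesBuchiPos_toPInst_iff,
    reduction true fun _ => WeightedPair.yesCoBuchiASPure_toPInst_iff,
    reduction false fun _ => WeightedPair.yesBuchiPosPure_toPInst_iff⟩

end Stmt18
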